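/- arXiv:math/0605154 — 4 statements merged into one kernel-verified Lean document; each statement's English description precedes it below -/
import Mathlib

section
/- Let G be a finite simple graph and let a, b, c, d be four distinct vertices of G such that there do not exist two vertex-disjoint paths in G, one joining a to c and one joining b to d, whose internal vertices avoid {a,b,c,d} (this holds whenever G is a plane graph and a, b, c, d appear in that cyclic order on a face of G). Then M(G)·M(G−{a,b,c,d}) + M(G−{a,c})·M(G−{b,d}) = M(G−{a,b})·M(G−{c,d}) + M(G−{a,d})·M(G−{b,c}). -/
/-- A perfect matching of the induced subgraph of `G` on the vertex set `s`,
represented as a set `m` of edges of `G`: every edge of `m` is an edge of `G`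
with both endpoints in `s`, and every vertex of `s` lies in exactly one edge of `m`. -/
def IsPMOn {α : Type*} (G : SimpleGraph α) (s : Finset α) (m : Finset (Sym2 α)) : Prop :=
  (∀ e ∈ m, e ∈ G.edgeSet ∧ ∀ v ∈ e, v ∈ s) ∧ ∀ v ∈ s, ∃! e, e ∈ m ∧ v ∈ e

/-- The number of perfect matchings of the induced subgraph of `G` on `s`. -/
noncomputable def pmCount {α : Type*} (G : SimpleGraph α) (s : Finset α) : ℕ :=
  Nat.card {m : Finset (Sym2 α) // IsPMOn G s m}

open Classical in
/-- The sum, over all perfect matchings of the induced subgraph of `G` on `s`,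
of the product of the weights of the edges of the matching. -/
noncomputable def pmSum {α R : Type*} [Fintype α] [DecidableEq α] [CommRing R]
    (G : SimpleGraph α) (w : Sym2 α → R) (s : Finset α) : R :=
  ∑ m ∈ Finset.univ.filter (fun m : Finset (Sym2 α) => IsPMOn G s m), ∏ e ∈ m, w e

/-- There are two vertex-disjoint paths in `G`, one joining `x₁` to `y₁` and one joining
`x₂` to `y₂`, whose internal vertices avoid `S`. -/
def DisjointPaths {α : Type*} (G : SimpleGraph α) (S : Set α) (x₁ y₁ x₂ y₂ : α) : Prop :=
  ∃ (p : G.Walk x₁ y₁) (q : G.Walk x₂ y₂), p.IsPath ∧ q.IsPath ∧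
    (∀ u ∈ p.support, u ∉ q.support) ∧
    (∀ u ∈ p.support, u ≠ x₁ → u ≠ y₁ → u ∉ S) ∧
    (∀ u ∈ q.support, u ≠ x₂ → u ≠ y₂ → u ∉ S)

/-- `G` is noncrossing with respect to the cyclic sequence given by the list `L`:
there are no indices `i < j < k < l` such that `G` contains two vertex-disjoint paths,
one joining `L[i]` to `L[k]` and one joining `L[j]` to `L[l]`, whose internal vertices
avoid the vertices of `L`. -/
def NoncrossingList {α : Type*} (G : SimpleGraph α) (L : List α) : Prop :=
  ∀ i j k l : Fin L.length, i < j → j < k → k < l →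
    ¬ DisjointPaths G {x | x ∈ L} (L.get i) (L.get k) (L.get j) (L.get l)

/-- `U, W` form a bipartition of the vertices of `G`. -/
def IsBipartition {α : Type*} [Fintype α] [DecidableEq α]
    (G : SimpleGraph α) (U W : Finset α) : Prop :=
  Disjoint U W ∧ U ∪ W = Finset.univ ∧
    ∀ ⦃x y⦄, G.Adj x y → ((x ∈ U ∧ y ∈ W) ∨ (x ∈ W ∧ y ∈ U))

/-- `P` is an `MH`-alternating path, where `MH` is the unique perfect matching of the
induced subgraph of `G` on the vertex set `sH`: `P` is a (nontrivial) path, among any two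
consecutive edges of `P` exactly one lies in `MH`, and for each endpoint the incident edge
of `P` lies in `MH` iff the endpoint belongs to `sH`. -/
def IsAltPath {α : Type*} (G : SimpleGraph α) (sH : Finset α) (MH : Finset (Sym2 α))
    {x y : α} (P : G.Walk x y) : Prop :=
  P.IsPath ∧ P.edges ≠ [] ∧
  P.edges.Chain' (fun e f => e ∈ MH ↔ f ∉ MH) ∧
  (∀ e ∈ P.edges.head?, (e ∈ MH ↔ x ∈ sH)) ∧
  (∀ e ∈ P.edges.getLast?, (e ∈ MH ↔ y ∈ sH))

/-- A family of pairwise vertex-disjoint `MH`-alternating paths in `G` whose set of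
path-endpoints is exactly `A`, each vertex of `A` being an endpoint of exactly one
path of the family. -/
def IsAltPathNest {α : Type*} (G : SimpleGraph α) (sH : Finset α) (MH : Finset (Sym2 α))
    (A : Finset α) (F : Finset (Σ x : α, Σ y : α, G.Walk x y)) : Prop :=
  (∀ p ∈ F, IsAltPath G sH MH p.2.2) ∧
  (∀ p ∈ F, ∀ q ∈ F, p ≠ q → ∀ u ∈ p.2.2.support, u ∉ q.2.2.support) ∧
  (∀ p ∈ F, p.1 ∈ A ∧ p.2.1 ∈ A) ∧
  (∀ v ∈ A, ∃! p, p ∈ F ∧ (v = p.1 ∨ v = p.2.1))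

/-- A 1-factor on `{1, …, n}`: a partition of `Fin n` into pairs, each pair recorded
as an ordered pair `(i, j)` with `i < j`. -/
def IsOneFactor (n : ℕ) (F : Finset (Fin n × Fin n)) : Prop :=
  (∀ p ∈ F, p.1 < p.2) ∧ ∀ v : Fin n, ∃! p, p ∈ F ∧ (v = p.1 ∨ v = p.2)

/-- The crossing number of a 1-factor: the number of pairs of pairs
`(i,j), (k,l)` in `F` with `i < k < j < l`. -/
def crossingNumber (n : ℕ) (F : Finset (Fin n × Fin n)) : ℕ :=
  ((F ×ˢ F).filter (fun q => q.1.1 < q.2.1 ∧ q.2.1 < q.1.2 ∧ q.1.2 < q.2.2)).card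


namespace GC

open Classical in
noncomputable def sw {α : Type*} [DecidableEq α] (C : Finset α) (M M' : Finset (Sym2 α)) :
    Finset (Sym2 α) :=
  M.filter (fun e => ∀ v ∈ e, v ∉ C) ∪ M'.filter (fun e => ∀ v ∈ e, v ∈ C)

lemma mem_sw {α : Type*} [DecidableEq α] {C : Finset α} {M M' : Finset (Sym2 α)} {e : Sym2 α} :
    e ∈ sw C M M' ↔ (e ∈ M ∧ ∀ v ∈ e, v ∉ C) ∨ (e ∈ M' ∧ ∀ v ∈ e, v ∈ C) := by
  simp [sw]

def gr {α : Type*} (E : Finset (Sym2 α)) : SimpleGraph α := SimpleGraph.fromEdgeSet (E : Set (Sym2 α))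

open Classical in
noncomputable def comp {α : Type*} [Fintype α] (E : Finset (Sym2 α)) (a : α) : Finset α :=
  Finset.univ.filter (fun v => (gr E).Reachable a v)

lemma mem_comp {α : Type*} [Fintype α] {E : Finset (Sym2 α)} {a v : α} :
    v ∈ comp E a ↔ (gr E).Reachable a v := by
  simp [comp]

def Closed {α : Type*} (C : Finset α) (M : Finset (Sym2 α)) : Prop :=
  ∀ e ∈ M, (∀ v ∈ e, v ∈ C) ∨ (∀ v ∈ e, v ∉ C)

lemma comp_closed {α : Type*} [Fintype α] (E : Finset (Sym2 α)) (a : α) :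
    Closed (comp E a) E := by
  intro e he
  induction e using Sym2.ind with
  | _ x y =>
    by_cases hxy : x = y
    · subst hxy
      by_cases h : x ∈ comp E a
      · left; simpa using h
      · right; simpa using h
    · have hadj : (gr E).Adj x y := by
        simp [gr, he, hxy]
      by_cases h : x ∈ comp E a
      · left
        have : y ∈ comp E a := mem_comp.2 ((mem_comp.1 h).trans hadj.reachable)
        simp [h, this]
      · right
        have : y ∉ comp E a := fun hy => h (mem_comp.2 ((mem_comp.1 hy).trans hadj.symm.reachable))
        simp [h, this]

lemma inout {α : Type*} {C : Finset α} {e : Sym2 α} (h1 : ∀ v ∈ e, v ∈ C)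
    (h2 : ∀ v ∈ e, v ∉ C) : False := by
  induction e using Sym2.ind with
  | _ x y => exact h2 x (by simp) (h1 x (by simp))

lemma sw_union {α : Type*} [DecidableEq α] {C : Finset α} {M M' : Finset (Sym2 α)}
    (h : Closed C (M ∪ M')) : sw C M M' ∪ sw C M' M = M ∪ M' := by
  ext e
  have := h e
  simp only [Finset.mem_union, mem_sw] at this ⊢
  tauto

lemma sw_sw {α : Type*} [DecidableEq α] {C : Finset α} {M M' : Finset (Sym2 α)}
    (h : Closed C (M ∪ M')) : sw C (sw C M M') (sw C M' M) = M := by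
  ext e
  have := h e
  have h2 := @inout α C e
  simp only [Finset.mem_union, mem_sw] at this ⊢
  tauto

lemma sw_pm {α : Type*} [DecidableEq α] {G : SimpleGraph α} {C s s' : Finset α}
    {M M' : Finset (Sym2 α)} (h : Closed C (M ∪ M')) (hM : IsPMOn G s M) (hM' : IsPMOn G s' M') :
    IsPMOn G ((s \ C) ∪ (s' ∩ C)) (sw C M M') := by
  constructor
  · intro e he
    rcases mem_sw.1 he with ⟨h1, h2⟩ | ⟨h1, h2⟩
    · refine ⟨(hM.1 e h1).1, fun v hv => ?_⟩
      simp [(hM.1 e h1).2 v hv, h2 v hv]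
    · refine ⟨(hM'.1 e h1).1, fun v hv => ?_⟩
      simp [(hM'.1 e h1).2 v hv, h2 v hv]
  · intro v hv
    by_cases hC : v ∈ C
    · have hs : v ∈ s' := by simpa [hC] using hv
      obtain ⟨e, ⟨he, hve⟩, hu⟩ := hM'.2 v hs
      refine ⟨e, ⟨mem_sw.2 (Or.inr ⟨he, ?_⟩), hve⟩, ?_⟩
      · rcases h e (by simp [he]) with h1 | h1
        · exact h1
        · exact absurd hC (h1 v hve)
      · rintro f ⟨hf, hvf⟩
        rcases mem_sw.1 hf with ⟨h1, h2⟩ | ⟨h1, h2⟩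
        · exact absurd hC (h2 v hvf)
        · exact hu f ⟨h1, hvf⟩
    · have hs : v ∈ s := by simpa [hC] using hv
      obtain ⟨e, ⟨he, hve⟩, hu⟩ := hM.2 v hs
      refine ⟨e, ⟨mem_sw.2 (Or.inl ⟨he, ?_⟩), hve⟩, ?_⟩
      · rcases h e (by simp [he]) with h1 | h1
        · exact absurd (h1 v hve) hC
        · exact h1
      · rintro f ⟨hf, hvf⟩
        rcases mem_sw.1 hf with ⟨h1, h2⟩ | ⟨h1, h2⟩
        · exact hu f ⟨h1, hvf⟩
        · exact absurd (h2 v hvf) hC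

lemma card_inside {α : Type*} [DecidableEq α] {G : SimpleGraph α} {C s : Finset α}
    [DecidablePred (fun e : Sym2 α => ∀ v ∈ e, v ∈ C)]
    {M : Finset (Sym2 α)} (h : Closed C M) (hM : IsPMOn G s M) :
    (M.filter (fun e => ∀ v ∈ e, v ∈ C)).card * 2 = (s ∩ C).card := by
  rw [← mul_one (s ∩ C).card]
  apply Finset.card_mul_eq_card_mul (fun (e : Sym2 α) (v : α) => v ∈ e)
  · intro e he
    rw [Finset.mem_filter] at he
    obtain ⟨he, hC⟩ := he
    obtain ⟨hG, hs⟩ := hM.1 e he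
    induction e using Sym2.ind with
    | _ x y =>
      have hxy : x ≠ y := by
        have : G.Adj x y := by simpa using hG
        exact this.ne
      have : (s ∩ C).bipartiteAbove (fun (e : Sym2 α) (v : α) => v ∈ e) s(x, y) = {x, y} := by
        ext v
        simp only [Finset.mem_bipartiteAbove, Finset.mem_inter, Finset.mem_insert,
          Finset.mem_singleton]
        constructor
        · rintro ⟨_, hv⟩; simpa using hv
        · intro hv
          have : v ∈ s(x, y) := by simpa using hv
          exact ⟨⟨hs v this, hC v this⟩, this⟩
      rw [this, Finset.card_pair hxy]
  · intro v hv
    rw [Finset.mem_inter] at hv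
    obtain ⟨e, ⟨he, hve⟩, hu⟩ := hM.2 v hv.1
    rw [Finset.card_eq_one]
    refine ⟨e, ?_⟩
    ext f
    simp only [Finset.mem_bipartiteBelow, Finset.mem_filter, Finset.mem_singleton]
    constructor
    · rintro ⟨⟨h1, _⟩, h2⟩; exact hu f ⟨h1, h2⟩
    · rintro rfl
      refine ⟨⟨he, ?_⟩, hve⟩
      rcases h f he with h1 | h1
      · exact h1
      · exact absurd hv.2 (h1 v hve)

lemma card_comp_le {α : Type*} [Fintype α] (E : Finset (Sym2 α)) (a : α)
    [DecidablePred (fun e : Sym2 α => ∀ v ∈ e, v ∈ comp E a)] :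
    (comp E a).card ≤ (E.filter (fun e => ∀ v ∈ e, v ∈ comp E a)).card + 1 := by
  set K := (gr E).connectedComponentMk a with hK
  have hmem : ∀ v, v ∈ K.supp ↔ v ∈ comp E a := by
    intro v
    rw [mem_comp, SimpleGraph.ConnectedComponent.mem_supp_iff, hK, SimpleGraph.ConnectedComponent.eq]
    exact ⟨fun h => h.symm, fun h => h.symm⟩
  have h1 := K.connected_toSimpleGraph.card_vert_le_card_edgeSet_add_one
  have h2 : Nat.card K = (comp E a).card := by
    rw [← Nat.card_eq_finsetCard (comp E a)]
    exact Nat.card_congr (Equiv.subtypeEquivRight hmem)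
  have h3 : Nat.card K.toSimpleGraph.edgeSet ≤
      Nat.card {e // e ∈ E.filter (fun e => ∀ v ∈ e, v ∈ comp E a)} := by
    refine Nat.card_le_card_of_injective (fun e => ⟨Sym2.map Subtype.val e.1, ?_⟩) ?_
    · obtain ⟨e, he⟩ := e
      induction e using Sym2.ind with
      | _ x y =>
        have hxy : (gr E).Adj x.1 y.1 := by
          simpa [SimpleGraph.ConnectedComponent.toSimpleGraph] using he
        have hx := (hmem x.1).1 x.2
        have hy := (hmem y.1).1 y.2
        have hE : s(x.1, y.1) ∈ E := by
          simp only [gr, SimpleGraph.fromEdgeSet_adj] at hxy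
          exact_mod_cast hxy.1
        simp [hE, hx, hy]
    · intro e f hef
      have := Sym2.map.injective Subtype.val_injective (congrArg Subtype.val hef)
      exact Subtype.ext this
  have h4 : Nat.card {e // e ∈ E.filter (fun e => ∀ v ∈ e, v ∈ comp E a)} =
    (E.filter (fun e => ∀ v ∈ e, v ∈ comp E a)).card :=
    Nat.card_eq_finsetCard _
  omega

lemma key {α : Type*} [Fintype α] [DecidableEq α] {G : SimpleGraph α} {S s s' : Finset α}
    {M M' : Finset (Sym2 α)} (hM : IsPMOn G s M) (hM' : IsPMOn G s' M')
    (h1 : ∀ v, v ∉ S → v ∈ s ∧ v ∈ s') (h2 : ∀ v ∈ S, (v ∈ s ↔ v ∉ s')) (x : α) :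
    Even (S ∩ comp (M ∪ M') x).card ∧ (S ∩ comp (M ∪ M') x).card ≤ 2 := by
  classical
  set C := comp (M ∪ M') x with hC
  have hcl : Closed C (M ∪ M') := comp_closed _ _
  have e1 := card_inside (fun e he => hcl e (by simp [he])) hM
  have e2 := card_inside (fun e he => hcl e (by simp [he])) hM'
  have e3 := card_comp_le (M ∪ M') x
  rw [← hC, Finset.filter_union] at e3
  have e4 := e3.trans (Nat.add_le_add_right (Finset.card_union_le _ _) 1)
  have e5 := Finset.card_union_add_card_inter (s ∩ C) (s' ∩ C)
  have e6 : (s ∩ C) ∪ (s' ∩ C) = C := by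
    ext v
    have := h1 v; have := h2 v
    simp only [Finset.mem_union, Finset.mem_inter]
    tauto
  have e7 : (s ∩ C) ∩ (s' ∩ C) = C \ S := by
    ext v
    have := h1 v; have := h2 v
    simp only [Finset.mem_sdiff, Finset.mem_inter]
    tauto
  have e8 := Finset.card_sdiff_add_card_inter C S
  rw [e6, e7] at e5
  rw [Finset.inter_comm] at e8
  refine ⟨?_, ?_⟩
  · rw [Nat.even_iff]
    omega
  · omega

lemma key4 {α : Type*} [Fintype α] [DecidableEq α] {G : SimpleGraph α} {a b c d : α}
    (hdist : ([a, b, c, d] : List α).Nodup) {s s' : Finset α}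
    {M M' : Finset (Sym2 α)} (hM : IsPMOn G s M) (hM' : IsPMOn G s' M')
    (h1 : ∀ v, v ∉ ({a, b, c, d} : Finset α) → v ∈ s ∧ v ∈ s')
    (h2 : ∀ v ∈ ({a, b, c, d} : Finset α), (v ∈ s ↔ v ∉ s')) (x : α)
    (C : Finset α) (hC : C = comp (M ∪ M') x) :
    let t := (if a ∈ C then 1 else 0) + (if b ∈ C then 1 else 0) + (if c ∈ C then 1 else 0)
      + (if d ∈ C then 1 else 0)
    t % 2 = 0 ∧ t ≤ 2 := by
  have := key hM hM' h1 h2 x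
  rw [← hC] at this
  have ht : (({a, b, c, d} : Finset α) ∩ C).card =
      (if a ∈ C then 1 else 0) + (if b ∈ C then 1 else 0) + (if c ∈ C then 1 else 0)
      + (if d ∈ C then 1 else 0) := by
    simp only [List.nodup_cons, List.mem_cons, List.not_mem_nil, or_false, not_or] at hdist
    obtain ⟨⟨hab, hac, had⟩, ⟨hbc, hbd⟩, hcd, -⟩ := hdist
    rw [← Finset.filter_mem_eq_inter, Finset.card_filter, Finset.sum_insert (by simp [*]),
      Finset.sum_insert (by simp [*]), Finset.sum_insert (by simp [*]), Finset.sum_singleton]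
    ring
  rw [ht, Nat.even_iff] at this
  exact this

lemma gr_le {α : Type*} [DecidableEq α] {G : SimpleGraph α} {s s' : Finset α}
    {M M' : Finset (Sym2 α)} (hM : IsPMOn G s M) (hM' : IsPMOn G s' M') :
    gr (M ∪ M') ≤ G := by
  intro x y h
  simp only [gr, SimpleGraph.fromEdgeSet_adj, Finset.mem_coe, Finset.mem_union] at h
  rcases h.1 with h | h
  · simpa using (hM.1 _ h).1
  · simpa using (hM'.1 _ h).1

lemma exists_path {α : Type*} [Fintype α] [DecidableEq α] {G : SimpleGraph α}
    {E : Finset (Sym2 α)} (h : gr E ≤ G) {x y : α} (hy : y ∈ comp E x) :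
    ∃ p : G.Walk x y, p.IsPath ∧ ∀ u ∈ p.support, u ∈ comp E x := by
  obtain ⟨p, hp⟩ := (mem_comp.1 hy).exists_isPath
  refine ⟨p.mapLe h, (SimpleGraph.Walk.isPath_mapLe h).2 hp, fun u hu => ?_⟩
  rw [SimpleGraph.Walk.support_mapLe_eq_support] at hu
  exact mem_comp.2 (p.takeUntil u hu).reachable

lemma dich {α : Type*} [Fintype α] [DecidableEq α] {G : SimpleGraph α} {a b c d : α}
    (hdist : ([a, b, c, d] : List α).Nodup)
    (hnc : ¬ DisjointPaths G {a, b, c, d} a c b d) {s s' : Finset α}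
    {M M' : Finset (Sym2 α)} (hM : IsPMOn G s M) (hM' : IsPMOn G s' M')
    (h1 : ∀ v, v ∉ ({a, b, c, d} : Finset α) → v ∈ s ∧ v ∈ s')
    (h2 : ∀ v ∈ ({a, b, c, d} : Finset α), (v ∈ s ↔ v ∉ s')) :
    a ∈ comp (M ∪ M') a ∧ c ∉ comp (M ∪ M') a ∧ (b ∈ comp (M ∪ M') a ↔ d ∉ comp (M ∪ M') a) := by
  have ha : a ∈ comp (M ∪ M') a := mem_comp.2 (SimpleGraph.Reachable.refl _)
  have hb : b ∈ comp (M ∪ M') b := mem_comp.2 (SimpleGraph.Reachable.refl _)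
  have kA := key4 hdist hM hM' h1 h2 a _ rfl
  have kB := key4 hdist hM hM' h1 h2 b _ rfl
  have hdisj : ∀ v, v ∈ comp (M ∪ M') a → v ∈ comp (M ∪ M') b → b ∈ comp (M ∪ M') a :=
    fun v hv hw => mem_comp.2 ((mem_comp.1 hv).trans (mem_comp.1 hw).symm)
  have hc : c ∉ comp (M ∪ M') a := by
    intro hc
    have hbA : b ∉ comp (M ∪ M') a := by
      intro h; simp only [ha, hc, h, if_true] at kA; split_ifs at kA <;> omega
    have hdA : d ∉ comp (M ∪ M') a := by
      intro h; simp only [ha, hc, h, if_true] at kA; split_ifs at kA <;> omega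
    have haB : a ∉ comp (M ∪ M') b := fun h => hbA (hdisj a ha h)
    have hcB : c ∉ comp (M ∪ M') b := fun h => hbA (hdisj c hc h)
    have hdB : d ∈ comp (M ∪ M') b := by
      by_contra h; simp only [haB, hcB, hb, h, if_true, if_false] at kB; omega
    obtain ⟨p, hp, hpC⟩ := exists_path (gr_le hM hM') hc
    obtain ⟨q, hq, hqC⟩ := exists_path (gr_le hM hM') hdB
    refine hnc ⟨p, q, hp, hq, fun u hu hu' => hbA (hdisj u (hpC u hu) (hqC u hu')), ?_, ?_⟩
    · intro u hu hua huc hS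
      have hu := hpC u hu
      simp only [Set.mem_insert_iff, Set.mem_singleton_iff] at hS
      rcases hS with rfl | rfl | rfl | rfl <;> contradiction
    · intro u hu hua huc hS
      have hu := hqC u hu
      simp only [Set.mem_insert_iff, Set.mem_singleton_iff] at hS
      rcases hS with rfl | rfl | rfl | rfl <;> contradiction
  refine ⟨ha, hc, ?_⟩
  simp only [ha, hc, if_true, if_false] at kA
  split_ifs at kA with h h' h' <;> simp_all

def Pr {α : Type*} (G : SimpleGraph α) (s s' : Finset α)
    (p : Finset (Sym2 α) × Finset (Sym2 α)) : Prop := IsPMOn G s p.1 ∧ IsPMOn G s' p.2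

lemma pm_unique {α : Type*} {G : SimpleGraph α} {s t : Finset α}
    {M : Finset (Sym2 α)} (h : IsPMOn G s M) (h' : IsPMOn G t M) : s = t := by
  have aux : ∀ {s t : Finset α}, IsPMOn G s M → IsPMOn G t M → s ⊆ t := by
    intro s t h h' v hv
    obtain ⟨e, ⟨he, hve⟩, -⟩ := h.2 v hv
    exact (h'.1 e he).2 v hve
  exact (aux h h').antisymm (aux h' h)

open Classical in
lemma card_pr {α : Type*} [Fintype α] (G : SimpleGraph α) (s s' : Finset α) :
    (Finset.univ.filter (Pr G s s')).card = pmCount G s * pmCount G s' := by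
  have : Finset.univ.filter (Pr G s s') =
      (Finset.univ.filter (IsPMOn G s)) ×ˢ (Finset.univ.filter (IsPMOn G s')) := by
    ext p; simp [Pr]
  rw [this, Finset.card_product]
  simp [pmCount, Fintype.card_subtype]

open Classical in
lemma card_or {α : Type*} [Fintype α] (G : SimpleGraph α) (s s' t t' : Finset α) (h : s ≠ t) :
    (Finset.univ.filter (fun p => Pr G s s' p ∨ Pr G t t' p)).card =
      pmCount G s * pmCount G s' + pmCount G t * pmCount G t' := by
  rw [Finset.filter_or, Finset.card_union_of_disjoint, card_pr, card_pr]
  rw [Finset.disjoint_filter]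
  intro p _ h1 h2
  exact h (pm_unique h1.1 h2.1)

noncomputable def swp {α : Type*} [Fintype α] [DecidableEq α] (a : α)
    (p : Finset (Sym2 α) × Finset (Sym2 α)) : Finset (Sym2 α) × Finset (Sym2 α) :=
  (sw (comp (p.1 ∪ p.2) a) p.1 p.2, sw (comp (p.1 ∪ p.2) a) p.2 p.1)

lemma swp_swp {α : Type*} [Fintype α] [DecidableEq α] (a : α)
    (p : Finset (Sym2 α) × Finset (Sym2 α)) : swp a (swp a p) = p := by
  have h := comp_closed (p.1 ∪ p.2) a
  have h' : Closed (comp (p.1 ∪ p.2) a) (p.2 ∪ p.1) := by rwa [Finset.union_comm p.2 p.1]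
  simp only [swp, sw_union h, sw_sw h, sw_sw h']

lemma swp_pr {α : Type*} [Fintype α] [DecidableEq α] {G : SimpleGraph α} {a b c d : α}
    (hdist : ([a, b, c, d] : List α).Nodup)
    (hnc : ¬ DisjointPaths G {a, b, c, d} a c b d) {s s' : Finset α}
    {p : Finset (Sym2 α) × Finset (Sym2 α)} (hp : Pr G s s' p)
    (h1 : ∀ v, v ∉ ({a, b, c, d} : Finset α) → v ∈ s ∧ v ∈ s')
    (h2 : ∀ v ∈ ({a, b, c, d} : Finset α), (v ∈ s ↔ v ∉ s')) :
    ∃ C : Finset α, a ∈ C ∧ c ∉ C ∧ (b ∈ C ↔ d ∉ C) ∧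
      Pr G ((s \ C) ∪ (s' ∩ C)) ((s' \ C) ∪ (s ∩ C)) (swp a p) := by
  obtain ⟨ha, hc, hbd⟩ := dich hdist hnc hp.1 hp.2 h1 h2
  have h := comp_closed (p.1 ∪ p.2) a
  have h' : Closed (comp (p.1 ∪ p.2) a) (p.2 ∪ p.1) := by rwa [Finset.union_comm p.2 p.1]
  exact ⟨_, ha, hc, hbd, sw_pm h hp.1 hp.2, sw_pm h' hp.2 hp.1⟩

/-- membership description of a set by its trace on the four vertices -/
lemma set_eq {α : Type*} [Fintype α] [DecidableEq α] {a b c d : α} {s t : Finset α}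
    (hs : ∀ v, v ∉ ({a, b, c, d} : Finset α) → v ∈ s)
    (ht : ∀ v, v ∉ ({a, b, c, d} : Finset α) → v ∈ t)
    (ha : a ∈ s ↔ a ∈ t) (hb : b ∈ s ↔ b ∈ t) (hc : c ∈ s ↔ c ∈ t) (hd : d ∈ s ↔ d ∈ t) :
    s = t := by
  ext v
  by_cases hv : v ∈ ({a, b, c, d} : Finset α)
  · simp only [Finset.mem_insert, Finset.mem_singleton] at hv
    rcases hv with rfl | rfl | rfl | rfl <;> assumption
  · simp [hs v hv, ht v hv]

end GC

/-- Graphical condensation for four vertices (Proposition 1.1). -/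
theorem graphical_condensation_four_vertices {α : Type*} [Fintype α] [DecidableEq α]
    (G : SimpleGraph α) (a b c d : α)
    (hdist : ([a, b, c, d] : List α).Nodup)
    (hnc : ¬ DisjointPaths G {a, b, c, d} a c b d) :
    pmCount G Finset.univ * pmCount G (Finset.univ \ {a, b, c, d}) +
      pmCount G (Finset.univ \ {a, c}) * pmCount G (Finset.univ \ {b, d}) =
    pmCount G (Finset.univ \ {a, b}) * pmCount G (Finset.univ \ {c, d}) +
      pmCount G (Finset.univ \ {a, d}) * pmCount G (Finset.univ \ {b, c}) := by
  classical
  have hd' := hdist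
  simp only [List.nodup_cons, List.mem_cons, List.not_mem_nil, or_false, not_or] at hd'
  obtain ⟨⟨hab, hac, had⟩, ⟨hbc, hbd⟩, hcd, -⟩ := hd'
  have hba := Ne.symm hab
  have hca := Ne.symm hac
  have hda := Ne.symm had
  have hcb := Ne.symm hbc
  have hdb := Ne.symm hbd
  have hdc := Ne.symm hcd
  rw [mul_comm (pmCount G (Finset.univ \ {a, c}))]
  have n1 : (Finset.univ : Finset α) ≠ Finset.univ \ {b, d} := by
    intro h
    have := Finset.mem_univ b
    rw [h] at this
    simp at this
  have n2 : (Finset.univ : Finset α) \ {a, b} ≠ Finset.univ \ {a, d} := by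
    intro h
    have : d ∈ (Finset.univ : Finset α) \ {a, b} := by simp [hda, hdb]
    rw [h] at this
    simp at this
  rw [← GC.card_or G _ _ _ _ n1, ← GC.card_or G _ _ _ _ n2]
  refine Finset.card_bij' (fun p _ => GC.swp a p) (fun p _ => GC.swp a p) ?_ ?_
    (fun p _ => GC.swp_swp a p) (fun p _ => GC.swp_swp a p)
  all_goals
    intro p hp
    simp only [Finset.mem_filter, Finset.mem_univ, true_and] at hp ⊢
    rcases hp with hp | hp
    all_goals
      obtain ⟨C, ha, hc, hb, h⟩ := GC.swp_pr hdist hnc hp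
        (by intro v hv; simp only [Finset.mem_insert, Finset.mem_singleton, not_or] at hv; simp [hv])
        (by intro v hv; simp only [Finset.mem_insert, Finset.mem_singleton] at hv
            rcases hv with rfl | rfl | rfl | rfl <;> simp [*])
      by_cases hd : d ∈ C
      all_goals
        simp only [hd, not_true, not_false_iff, iff_true, iff_false] at hb
        first
        | left
          convert h using 1 <;>
          · refine GC.set_eq (a := a) (b := b) (c := c) (d := d) ?_ ?_ ?_ ?_ ?_ ?_
            · intro v hv; simp only [Finset.mem_insert, Finset.mem_singleton, not_or] at hv; simp [hv]
            · intro v hv; simp only [Finset.mem_insert, Finset.mem_singleton, not_or] at hv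
              by_cases hvC : v ∈ C <;> simp [hv, hvC]
            all_goals simp only [Finset.mem_union, Finset.mem_sdiff, Finset.mem_inter,
              Finset.mem_univ, Finset.mem_insert, Finset.mem_singleton, ha, hb, hc, hd,
              hab, hac, had, hbc, hbd, hcd, hba, hca, hda, hcb, hdb, hdc,
              or_true, true_or, or_false, false_or, and_true, true_and, and_false, false_and,
              not_true, not_false_iff]
        | right
          convert h using 1 <;>
          · refine GC.set_eq (a := a) (b := b) (c := c) (d := d) ?_ ?_ ?_ ?_ ?_ ?_
            · intro v hv; simp only [Finset.mem_insert, Finset.mem_singleton, not_or] at hv; simp [hv]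
            · intro v hv; simp only [Finset.mem_insert, Finset.mem_singleton, not_or] at hv
              by_cases hvC : v ∈ C <;> simp [hv, hvC]
            all_goals simp only [Finset.mem_union, Finset.mem_sdiff, Finset.mem_inter,
              Finset.mem_univ, Finset.mem_insert, Finset.mem_singleton, ha, hb, hc, hd,
              hab, hac, had, hbc, hbd, hcd, hba, hca, hda, hcb, hdb, hdc,
              or_true, true_or, or_false, false_or, and_true, true_and, and_false, false_and,
              not_true, not_false_iff]
end

section
/- Let G be a finite simple graph with 2n vertices and edge weights in a commutative ring, let 2 ≤ k ≤ n, and let a_1, b_1, a_2, b_2, …, a_k, b_k be distinct vertices such that G is noncrossing with respect to the cyclic sequence (a_1, b_1, a_2, b_2, …, a_k, b_k). Set A = {a_1,…,a_k} and B = {b_1,…,b_k}. Then for every j with 1 ≤ j ≤ k: Σ_{W⊆B, |W| even} M(G−W)·M(G−A−(B∖W)) = Σ_{Y⊆B, |Y| odd} M(G−{a_j}−Y)·M(G−(A∖{a_j})−(B∖Y)). -/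
section YYZ

lemma yyz_even_of_invol {β : Type*} [DecidableEq β] (s : Finset β) (f : β → β)
    (h1 : ∀ x ∈ s, f x ∈ s) (h2 : ∀ x ∈ s, f (f x) = x) (h3 : ∀ x ∈ s, f x ≠ x) :
    Even s.card := by
  have : ∑ x ∈ s, (1 : ZMod 2) = 0 := by
    refine Finset.sum_involution (fun x _ => f x) ?_ ?_ ?_ ?_
    · intros; decide
    · intro x hx _; exact h3 x hx
    · intro x hx; exact h1 x hx
    · intro x hx; exact h2 x hx
  rw [Finset.sum_const, nsmul_eq_mul, mul_one] at this
  exact (ZMod.natCast_eq_zero_iff_even).1 this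

lemma yyz_noncross {N : ℕ} (r : Fin N → Fin N → Prop) (hs : ∀ i j, r i j → r j i)
    (hir : ∀ i, ¬ r i i) (hu : ∀ i, ∃! j, r i j)
    (hc : ∀ i j k l, i < j → j < k → k < l → r i k → r j l → False)
    (i j : Fin N) (hij : r i j) : Odd (i.val + j.val) := by
  wlog hlt : i < j generalizing i j
  · have := this j i (hs _ _ hij) (lt_of_le_of_ne (not_lt.1 hlt) (fun h => hir i (h ▸ hij)))
    rwa [add_comm]
  choose f hf huf using hu
  have hff : ∀ x, f (f x) = x := fun x => (huf _ _ (hs _ _ (hf x))).symm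
  have hfi : f i = j := (huf _ _ hij).symm
  have hfj : f j = i := by rw [← hfi, hff]
  have hE : Even (Finset.Ioo i j).card := by
    refine yyz_even_of_invol _ f ?_ (fun x _ => hff x) ?_
    · intro x hx
      rw [Finset.mem_Ioo] at hx ⊢
      by_contra hcon
      have hne1 : f x ≠ i := fun h => by
        have := hff x; rw [h, hfi] at this; exact absurd this hx.2.ne'
      have hne2 : f x ≠ j := fun h => by
        have := hff x; rw [h, hfj] at this; exact absurd this hx.1.ne
      rcases lt_or_gt_of_ne hne1 with h | h
      · exact hc _ _ _ _ h hx.1 hx.2 (hs _ _ (hf x)) hij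
      · rcases lt_or_gt_of_ne hne2 with h' | h'
        · exact hcon ⟨h, h'⟩
        · exact hc _ _ _ _ hx.1 hx.2 h' hij (hf x)
    · intro x _ h
      exact hir x (by have := hf x; rwa [h] at this)
  rw [Fin.card_Ioo] at hE
  have : i.val < j.val := hlt
  rcases hE with ⟨q, hq⟩
  exact ⟨i.val + q, by omega⟩

lemma yyz_path_nbrs {α : Type*} (H : SimpleGraph α) {u v : α} (P : H.Walk u v) (hP : P.IsPath)
    (x : α) (hx : x ∈ P.support) (h1 : x ≠ u) (h2 : x ≠ v) :
    ∃ y z, y ≠ z ∧ H.Adj x y ∧ H.Adj x z ∧ y ∈ P.support ∧ z ∈ P.support := by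
  obtain ⟨i, rfl, hi⟩ := SimpleGraph.Walk.mem_support_iff_exists_getVert.1 hx
  have h0 : i ≠ 0 := by rintro rfl; simp at h1
  have hl : i ≠ P.length := by rintro rfl; simp at h2
  refine ⟨P.getVert (i-1), P.getVert (i+1), ?_, ?_, ?_, P.getVert_mem_support _,
    P.getVert_mem_support _⟩
  · intro h
    have := hP.getVert_injOn (by simp; omega) (by simp; omega) h
    omega
  · have := P.adj_getVert_succ (i := i-1) (by omega)
    rw [show i - 1 + 1 = i by omega] at this
    exact this.symm
  · exact P.adj_getVert_succ (by omega)

lemma yyz_closed {α : Type*} (H : SimpleGraph α) {u v : α} (P : H.Walk u v) (hP : P.IsPath)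
    (huv : u ≠ v) (hu : ∀ x y, H.Adj u x → H.Adj u y → x = y)
    (hv : ∀ x y, H.Adj v x → H.Adj v y → x = y)
    (h2 : ∀ t x y z, H.Adj t x → H.Adj t y → H.Adj t z → x = y ∨ y = z ∨ x = z)
    (x y : α) (hx : x ∈ P.support) (hxy : H.Adj x y) : y ∈ P.support := by
  have hlen : 0 < P.length := by
    rcases Nat.eq_zero_or_pos P.length with h | h
    · exact absurd (SimpleGraph.Walk.eq_of_length_eq_zero h) huv
    · exact h
  by_cases h : x = u
  · subst h
    have := P.adj_getVert_succ (i := 0) hlen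
    rw [P.getVert_zero] at this
    rw [hu _ _ hxy this]
    exact P.getVert_mem_support _
  by_cases h' : x = v
  · subst h'
    have := P.adj_getVert_succ (i := P.length - 1) (by omega)
    rw [show P.length - 1 + 1 = P.length by omega, P.getVert_length] at this
    rw [hv _ _ hxy this.symm]
    exact P.getVert_mem_support _
  obtain ⟨p, q, hpq, hp, hq, hps, hqs⟩ := yyz_path_nbrs H P hP x hx h h'
  rcases h2 x y p q hxy hp hq with h | h | h
  · rwa [h]
  · exact absurd h hpq
  · rwa [h]

lemma yyz_reach {α : Type*} (H : SimpleGraph α) (S : Set α)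
    (hS : ∀ x y, x ∈ S → H.Adj x y → y ∈ S) {u v : α} (hu : u ∈ S) (h : H.Reachable u v) :
    v ∈ S := by
  obtain ⟨p⟩ := h
  induction p with
  | nil => exact hu
  | cons h p ih => exact ih (hS _ _ hu h)

/-- Union graph of two matchings. -/
def yyzH {α : Type*} [DecidableEq α] (m : Finset (Sym2 α)) : SimpleGraph α :=
  SimpleGraph.fromEdgeSet (m : Set (Sym2 α))

open Classical in
/-- Component of `x` in the union graph. -/
noncomputable def yyzC {α : Type*} [Fintype α] [DecidableEq α] (m : Finset (Sym2 α)) (x : α) :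
    Finset α :=
  Finset.univ.filter (fun v => (yyzH m).Reachable x v)

open Classical in
/-- Swap along `C`. -/
noncomputable def yyzSwap {α : Type*} [DecidableEq α] (C : Finset α) (m1 m2 : Finset (Sym2 α)) :
    Finset (Sym2 α) :=
  m1.filter (fun e => ¬ ∃ v ∈ e, v ∈ C) ∪ m2.filter (fun e => ∃ v ∈ e, v ∈ C)

lemma yyzH_adj {α : Type*} [DecidableEq α] (m : Finset (Sym2 α)) (x y : α) :
    (yyzH m).Adj x y ↔ s(x, y) ∈ m ∧ x ≠ y := by
  simp [yyzH]

variable {α R : Type*} [Fintype α] [DecidableEq α] [CommRing R]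

lemma yyz_swap_union (C : Finset α) (m1 m2 : Finset (Sym2 α)) :
    yyzSwap C m1 m2 ∪ yyzSwap C m2 m1 = m1 ∪ m2 := by
  ext e
  simp only [yyzSwap, Finset.mem_union, Finset.mem_filter]
  tauto

lemma yyz_swap_swap (C : Finset α) (m1 m2 : Finset (Sym2 α)) :
    yyzSwap C (yyzSwap C m1 m2) (yyzSwap C m2 m1) = m1 := by
  ext e
  simp only [yyzSwap, Finset.mem_union, Finset.mem_filter]
  by_cases hc : ∃ v ∈ e, v ∈ C
  · simp [hc]
  · simp [hc]

lemma yyz_prod_aux (w : Sym2 α → R) (c : Sym2 α → Prop) [DecidablePred c]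
    [DecidablePred (fun e => ¬ c e)] (m1 m2 : Finset (Sym2 α)) :
    (∏ e ∈ m1.filter (fun e => ¬ c e) ∪ m2.filter c, w e) *
      (∏ e ∈ m2.filter (fun e => ¬ c e) ∪ m1.filter c, w e) =
      (∏ e ∈ m1, w e) * (∏ e ∈ m2, w e) := by
  rw [Finset.prod_union, Finset.prod_union,
    ← Finset.prod_filter_mul_prod_filter_not m1 c,
    ← Finset.prod_filter_mul_prod_filter_not m2 c]
  · ring
  · rw [Finset.disjoint_left]; intro e he he'
    exact (Finset.mem_filter.1 he).2 (Finset.mem_filter.1 he').2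
  · rw [Finset.disjoint_left]; intro e he he'
    exact (Finset.mem_filter.1 he).2 (Finset.mem_filter.1 he').2

lemma yyz_swap_prod (w : Sym2 α → R) (C : Finset α) (m1 m2 : Finset (Sym2 α)) :
    (∏ e ∈ yyzSwap C m1 m2, w e) * (∏ e ∈ yyzSwap C m2 m1, w e) =
      (∏ e ∈ m1, w e) * (∏ e ∈ m2, w e) := by
  unfold yyzSwap
  convert yyz_prod_aux w (fun e => ∃ v ∈ e, v ∈ C) m1 m2

lemma yyz_pm_swap (G : SimpleGraph α) (C s1 s2 s : Finset α) (m1 m2 : Finset (Sym2 α))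
    (h1 : IsPMOn G s1 m1) (h2 : IsPMOn G s2 m2)
    (hC : ∀ e ∈ m1 ∪ m2, ∀ u ∈ e, ∀ v ∈ e, u ∈ C → v ∈ C)
    (hs : ∀ v, v ∈ s ↔ (v ∈ C ∧ v ∈ s2) ∨ (v ∉ C ∧ v ∈ s1)) :
    IsPMOn G s (yyzSwap C m1 m2) := by
  classical
  have hm : ∀ e, e ∈ yyzSwap C m1 m2 ↔
      (e ∈ m1 ∧ ∀ v ∈ e, v ∉ C) ∨ (e ∈ m2 ∧ ∀ v ∈ e, v ∈ C) := by
    intro e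
    simp only [yyzSwap, Finset.mem_union, Finset.mem_filter]
    constructor
    · rintro (⟨h, h'⟩ | ⟨h, u, hu, h'⟩)
      · left; exact ⟨h, fun v hv hvC => h' ⟨v, hv, hvC⟩⟩
      · right; exact ⟨h, fun v hv => hC e (Finset.mem_union_right _ h) u hu v hv h'⟩
    · rintro (⟨h, h'⟩ | ⟨h, h'⟩)
      · left; exact ⟨h, fun ⟨v, hv, hvC⟩ => h' v hv hvC⟩
      · right; refine ⟨h, ?_⟩
        induction e with | _ x y => exact ⟨x, by simp, h' x (by simp)⟩
  constructor
  · intro e he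
    rcases (hm e).1 he with ⟨h, h'⟩ | ⟨h, h'⟩
    · exact ⟨(h1.1 e h).1, fun v hv => (hs v).2 (Or.inr ⟨h' v hv, (h1.1 e h).2 v hv⟩)⟩
    · exact ⟨(h2.1 e h).1, fun v hv => (hs v).2 (Or.inl ⟨h' v hv, (h2.1 e h).2 v hv⟩)⟩
  · intro v hv
    rcases (hs v).1 hv with ⟨hvC, hv'⟩ | ⟨hvC, hv'⟩
    · obtain ⟨e, ⟨he, hve⟩, hu⟩ := h2.2 v hv'
      refine ⟨e, ⟨(hm e).2 (Or.inr ⟨he, fun x hx =>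
        hC e (Finset.mem_union_right _ he) v hve x hx hvC⟩), hve⟩, ?_⟩
      rintro e' ⟨he', hve'⟩
      rcases (hm e').1 he' with ⟨h, h'⟩ | ⟨h, h'⟩
      · exact absurd hvC (h' v hve')
      · exact hu e' ⟨h, hve'⟩
    · obtain ⟨e, ⟨he, hve⟩, hu⟩ := h1.2 v hv'
      refine ⟨e, ⟨(hm e).2 (Or.inl ⟨he, fun x hx hxC =>
        hvC (hC e (Finset.mem_union_left _ he) x hx v hve hxC)⟩), hve⟩, ?_⟩
      rintro e' ⟨he', hve'⟩
      rcases (hm e').1 he' with ⟨h, h'⟩ | ⟨h, h'⟩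
      · exact hu e' ⟨h, hve'⟩
      · exact absurd (h' v hve') hvC

lemma yyz_C_closed (m : Finset (Sym2 α)) (x : α) :
    ∀ e ∈ m, ∀ u ∈ e, ∀ v ∈ e, u ∈ yyzC m x → v ∈ yyzC m x := by
  intro e he u hu v hv huC
  by_cases huv : u = v
  · exact huv ▸ huC
  have : e = s(u, v) := ((Sym2.mem_and_mem_iff huv).1 ⟨hu, hv⟩)
  subst this
  simp only [yyzC, Finset.mem_filter, Finset.mem_univ, true_and] at huC ⊢
  exact huC.trans ((yyzH_adj _ _ _).2 ⟨he, huv⟩).reachable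

lemma yyz_pm_unique {G : SimpleGraph α} {s : Finset α} {m : Finset (Sym2 α)} (h : IsPMOn G s m)
    {v x y : α} (hx : s(v, x) ∈ m) (hy : s(v, y) ∈ m) : x = y := by
  have hv : v ∈ s := (h.1 _ hx).2 v (by simp)
  have := (h.2 v hv).unique ⟨hx, by simp⟩ ⟨hy, by simp⟩
  exact Sym2.congr_right.1 this

lemma yyz_even_inter {G : SimpleGraph α} {s : Finset α} {m : Finset (Sym2 α)} (h : IsPMOn G s m)
    (C : Finset α) (hC : ∀ e ∈ m, ∀ u ∈ e, ∀ v ∈ e, u ∈ C → v ∈ C) : Even (C ∩ s).card := by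
  classical
  have hex : ∀ v, ∃ x, v ∈ s → s(v, x) ∈ m := by
    intro v
    by_cases hv : v ∈ s
    · obtain ⟨e, ⟨he, hve⟩, -⟩ := h.2 v hv
      obtain ⟨x, rfl⟩ := Sym2.mem_iff_exists.1 hve
      exact ⟨x, fun _ => he⟩
    · exact ⟨v, fun h => absurd h hv⟩
  choose f hf using hex
  have hfs : ∀ v ∈ s, f v ∈ s := fun v hv => (h.1 _ (hf v hv)).2 _ (by simp)
  refine yyz_even_of_invol _ f ?_ ?_ ?_
  · intro x hx
    rw [Finset.mem_inter] at hx ⊢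
    exact ⟨hC _ (hf x hx.2) x (by simp) _ (by simp) hx.1, hfs x hx.2⟩
  · intro x hx
    have hx := (Finset.mem_inter.1 hx).2
    refine yyz_pm_unique h (hf _ (hfs x hx)) ?_
    rw [Sym2.eq_swap]; exact hf x hx
  · intro x hx he
    have hx := (Finset.mem_inter.1 hx).2
    have := (h.1 _ (hf x hx)).1
    rw [he] at this
    simp at this

/-- Component structure: each terminal is linked by a path to exactly one other. -/
lemma yyz_link (G : SimpleGraph α) (T X1 X2 : Finset α) (hd : Disjoint X1 X2) (hT : X1 ∪ X2 = T)
    (m1 m2 : Finset (Sym2 α)) (h1 : IsPMOn G (Finset.univ \ X1) m1)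
    (h2 : IsPMOn G (Finset.univ \ X2) m2) (u : α) (hu : u ∈ T) :
    ∃ v ∈ T, v ≠ u ∧ (yyzH (m1 ∪ m2)).Reachable u v ∧
      (∀ t ∈ T, (yyzH (m1 ∪ m2)).Reachable u t → t = u ∨ t = v) ∧
      ∃ P : (yyzH (m1 ∪ m2)).Walk u v, P.IsPath ∧ ∀ x ∈ P.support, x ≠ u → x ≠ v → x ∉ T := by
  classical
  set H := yyzH (m1 ∪ m2) with hH
  have hadj : ∀ x y, H.Adj x y → s(x, y) ∈ m1 ∨ s(x, y) ∈ m2 := by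
    intro x y h
    exact Finset.mem_union.1 ((yyzH_adj _ _ _).1 h).1
  have hmem1 : ∀ x y, s(x, y) ∈ m1 → x ∉ X1 := fun x y h => by
    have := (h1.1 _ h).2 x (by simp); simpa using this
  have hmem2 : ∀ x y, s(x, y) ∈ m2 → x ∉ X2 := fun x y h => by
    have := (h2.1 _ h).2 x (by simp); simpa using this
  have hdeg1 : ∀ t ∈ T, ∀ x y, H.Adj t x → H.Adj t y → x = y := by
    intro t ht x y hx hy
    rw [← hT, Finset.mem_union] at ht
    rcases hadj _ _ hx with hx | hx <;> rcases hadj _ _ hy with hy | hy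
    · exact yyz_pm_unique h1 hx hy
    · have := hmem1 _ _ hx; have := hmem2 _ _ hy; tauto
    · have := hmem2 _ _ hx; have := hmem1 _ _ hy; tauto
    · exact yyz_pm_unique h2 hx hy
  have hdeg2 : ∀ t x y z, H.Adj t x → H.Adj t y → H.Adj t z → x = y ∨ y = z ∨ x = z := by
    intro t x y z hx hy hz
    have e1 := fun p q => @yyz_pm_unique α _ _ _ _ _ h1 t p q
    have e2 := fun p q => @yyz_pm_unique α _ _ _ _ _ h2 t p q
    rcases hadj _ _ hx with hx | hx <;> rcases hadj _ _ hy with hy | hy <;>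
      rcases hadj _ _ hz with hz | hz
    · exact Or.inl (e1 _ _ hx hy)
    · exact Or.inl (e1 _ _ hx hy)
    · exact Or.inr (Or.inr (e1 _ _ hx hz))
    · exact Or.inr (Or.inl (e2 _ _ hy hz))
    · exact Or.inr (Or.inl (e1 _ _ hy hz))
    · exact Or.inr (Or.inr (e2 _ _ hx hz))
    · exact Or.inl (e2 _ _ hx hy)
    · exact Or.inl (e2 _ _ hx hy)
  set C := yyzC (m1 ∪ m2) u with hC
  have hCc := yyz_C_closed (m1 ∪ m2) u
  have E1 := yyz_even_inter h1 C (fun e he => hCc e (Finset.mem_union_left _ he))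
  have E2 := yyz_even_inter h2 C (fun e he => hCc e (Finset.mem_union_right _ he))
  have hcT : Even (C ∩ T).card := by
    have k1 : (C ∩ (Finset.univ \ X1)).card + (C ∩ X1).card = C.card := by
      rw [← Finset.card_union_of_disjoint]
      · congr 1; ext x; simp; tauto
      · rw [Finset.disjoint_left]; intro x; simp; tauto
    have k2 : (C ∩ (Finset.univ \ X2)).card + (C ∩ X2).card = C.card := by
      rw [← Finset.card_union_of_disjoint]
      · congr 1; ext x; simp; tauto
      · rw [Finset.disjoint_left]; intro x; simp; tauto
    have k3 : (C ∩ T).card = (C ∩ X1).card + (C ∩ X2).card := by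
      rw [← hT, Finset.inter_union_distrib_left, Finset.card_union_of_disjoint]
      exact hd.mono Finset.inter_subset_right Finset.inter_subset_right
    rw [Nat.even_iff] at *
    omega
  have huC : u ∈ C := by simp [hC, yyzC]
  have hlt : 1 < (C ∩ T).card := by
    have : 0 < (C ∩ T).card := Finset.card_pos.2 ⟨u, Finset.mem_inter.2 ⟨huC, hu⟩⟩
    rcases hcT with ⟨q, hq⟩
    omega
  obtain ⟨v, hv, hvu⟩ := Finset.exists_mem_ne hlt u
  rw [Finset.mem_inter] at hv
  have hr : H.Reachable u v := by
    have := hv.1; simpa [hC, yyzC] using this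
  obtain ⟨P, hP⟩ := hr.exists_isPath
  have hint : ∀ x ∈ P.support, x ≠ u → x ≠ v → x ∉ T := by
    intro x hx hxu hxv hxT
    obtain ⟨y, z, hyz, hy, hz, -, -⟩ := yyz_path_nbrs H P hP x hx hxu hxv
    exact hyz (hdeg1 x hxT _ _ hy hz)
  refine ⟨v, hv.2, hvu, hr, ?_, P, hP, hint⟩
  intro t ht hrt
  have : t ∈ P.support := yyz_reach H {x | x ∈ P.support}
    (fun x y hx hxy => yyz_closed H P hP hvu.symm (hdeg1 u hu) (hdeg1 v hv.2) hdeg2 x y hx hxy)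
    (by simp) hrt
  by_contra hcon
  push Not at hcon
  exact hint t this hcon.1 hcon.2 ht

lemma yyz_get {k : ℕ} (a b : Fin k → α) (l : List (Fin k)) (i : ℕ) :
    (l.flatMap (fun i => [a i, b i]))[2 * i]? = l[i]?.map a ∧
    (l.flatMap (fun i => [a i, b i]))[2 * i + 1]? = l[i]?.map b := by
  induction l generalizing i with
  | nil => simp
  | cons x l ih =>
    cases i with
    | zero => simp
    | succ i =>
      have := ih i
      simp only [List.flatMap_cons, List.cons_append, List.nil_append, Nat.mul_add, mul_one,
        List.getElem?_cons_succ]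
      exact this

/-- Key: the component of `a j` contains exactly `a j` and some `b i` as terminals. -/
lemma yyz_key (G : SimpleGraph α) (k : ℕ) (a b : Fin k → α)
    (hdist : ((List.finRange k).flatMap (fun i => [a i, b i])).Nodup)
    (hnc : NoncrossingList G ((List.finRange k).flatMap (fun i => [a i, b i])))
    (T X1 X2 : Finset α) (hTm : ∀ x, x ∈ T ↔ x ∈ (List.finRange k).flatMap (fun i => [a i, b i]))
    (hd : Disjoint X1 X2) (hT : X1 ∪ X2 = T)
    (m1 m2 : Finset (Sym2 α)) (h1 : IsPMOn G (Finset.univ \ X1) m1)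
    (h2 : IsPMOn G (Finset.univ \ X2) m2) (j : Fin k) :
    ∃ i, ∀ x ∈ T, x ∈ yyzC (m1 ∪ m2) (a j) ↔ x = a j ∨ x = b i := by
  classical
  have hget := yyz_get a b (List.finRange k)
  have hlen : ((List.finRange k).flatMap (fun i => [a i, b i])).length = 2 * k := by
    simp [List.length_flatMap, mul_comm]
  set L := (List.finRange k).flatMap (fun i => [a i, b i]) with hL
  set H := yyzH (m1 ∪ m2) with hH
  have hHG : H ≤ G := by
    intro x y h
    rcases Finset.mem_union.1 ((yyzH_adj _ _ _).1 h).1 with h | h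
    · exact (h1.1 _ h).1
    · exact (h2.1 _ h).1
  have hlink := yyz_link G T X1 X2 hd hT m1 m2 h1 h2
  have hinj : ∀ p q : Fin L.length, L.get p = L.get q → p = q := fun p q h =>
    List.nodup_iff_injective_get.1 hdist h
  have hgT : ∀ p : Fin L.length, L.get p ∈ T := fun p => (hTm _).2 (List.get_mem _ _)
  have hpath : ∀ p q : Fin L.length, p ≠ q → H.Reachable (L.get p) (L.get q) →
      (∀ t, H.Reachable (L.get p) (L.get t) → t = p ∨ t = q) ∧
      ∃ P : H.Walk (L.get p) (L.get q), P.IsPath ∧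
        ∀ x ∈ P.support, x ≠ L.get p → x ≠ L.get q → x ∉ T := by
    intro p q hpq hr
    obtain ⟨v, hv, hvu, hrv, huniq, hP⟩ := hlink (L.get p) (hgT p)
    have hqv : L.get q = v := by
      rcases huniq _ (hgT q) hr with h | h
      · exact absurd (hinj _ _ h).symm hpq
      · exact h
    subst hqv
    refine ⟨fun t ht => ?_, hP⟩
    rcases huniq _ (hgT t) ht with h | h
    · exact Or.inl (hinj _ _ h)
    · exact Or.inr (hinj _ _ h)
  have hodd := yyz_noncross (N := L.length)
    (fun p q => p ≠ q ∧ H.Reachable (L.get p) (L.get q))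
    (fun p q h => ⟨h.1.symm, h.2.symm⟩) (fun p h => h.1 rfl)
    (by
      intro p
      obtain ⟨v, hv, hvu, hrv, huniq, hP⟩ := hlink (L.get p) (hgT p)
      obtain ⟨q, rfl⟩ := List.mem_iff_get.1 ((hTm _).1 hv)
      refine ⟨q, ⟨fun h => hvu (by rw [h]), hrv⟩, ?_⟩
      rintro t ⟨ht, hrt⟩
      rcases huniq _ (hgT t) hrt with h | h
      · exact absurd (hinj _ _ h).symm ht
      · exact hinj _ _ h)
    (by
      rintro p q r s hpq hqr hrs ⟨hpr, hRpr⟩ ⟨hqs, hRqs⟩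
      obtain ⟨hu1, P, hP, hPi⟩ := hpath p r hpr hRpr
      obtain ⟨hu2, Q, hQ, hQi⟩ := hpath q s hqs hRqs
      refine hnc p q r s hpq hqr hrs ⟨P.mapLe hHG, Q.mapLe hHG, ?_, ?_, ?_, ?_, ?_⟩
      · exact hP.mapLe hHG
      · exact hQ.mapLe hHG
      · intro u hu hu'
        rw [SimpleGraph.Walk.support_mapLe_eq_support] at hu hu'
        have hR : H.Reachable (L.get p) (L.get q) :=
          (P.takeUntil u hu).reachable.trans (Q.takeUntil u hu').reachable.symm
        rcases hu1 q hR with h | h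
        · exact hpq.ne' h
        · exact hqr.ne h
      · intro u hu hup hur hmem
        rw [SimpleGraph.Walk.support_mapLe_eq_support] at hu
        exact hPi u hu hup hur ((hTm u).2 hmem)
      · intro u hu hup hur hmem
        rw [SimpleGraph.Walk.support_mapLe_eq_support] at hu
        exact hQi u hu hup hur ((hTm u).2 hmem))
  have hjl : 2 * j.val < L.length := by have := j.2; omega
  have haj : L.get ⟨2 * j.val, hjl⟩ = a j := by
    have := (hget j.val).1
    rw [List.getElem?_eq_getElem hjl] at this
    simpa using this
  obtain ⟨v, hv, hvu, hrv, huniq, -⟩ := hlink (a j) (by rw [← haj]; exact hgT _)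
  obtain ⟨q, rfl⟩ := List.mem_iff_get.1 ((hTm _).1 hv)
  have ho := hodd ⟨2 * j.val, hjl⟩ q
    ⟨fun h => hvu (by rw [← h, haj]), by rw [haj]; exact hrv⟩
  obtain ⟨i, hi⟩ : ∃ i : ℕ, q.val = 2 * i + 1 := by
    rcases ho with ⟨r, hr⟩
    simp only at hr
    exact ⟨r - j.val, by omega⟩
  have hik : i < k := by have := q.2; omega
  have hbi : L.get q = b ⟨i, hik⟩ := by
    have h := (hget i).2
    have hq2 : 2 * i + 1 < L.length := hi ▸ q.2
    rw [List.getElem?_eq_getElem hq2] at h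
    have hq : q = ⟨2 * i + 1, hq2⟩ := Fin.ext hi
    rw [hq]
    simpa [hik] using h
  refine ⟨⟨i, hik⟩, fun x hx => ?_⟩
  simp only [yyzC, Finset.mem_filter, Finset.mem_univ, true_and]
  rw [← hbi]
  constructor
  · exact huniq x hx
  · rintro (rfl | rfl)
    · exact SimpleGraph.Reachable.refl _
    · exact hrv

lemma yyz_parity (W : Finset α) (x : α) :
    Even (symmDiff W {x}).card ↔ ¬ Even W.card := by
  by_cases h : x ∈ W
  · have : symmDiff W {x} = W.erase x := by
      ext y; simp [Finset.mem_symmDiff]; grind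
    rw [this, ← Finset.card_erase_add_one h, Nat.even_add_one, not_not]
  · have : symmDiff W {x} = insert x W := by
      ext y; simp [Finset.mem_symmDiff]; grind
    rw [this, Finset.card_insert_of_notMem h, Nat.even_add_one]

end YYZ

/-- Yan–Yeh–Zhang graphical condensation (Theorem 1.2). -/
theorem yan_yeh_zhang_condensation {α R : Type*} [Fintype α] [DecidableEq α] [CommRing R]
    (G : SimpleGraph α) (w : Sym2 α → R) (n k : ℕ)
    (hcard : Fintype.card α = 2 * n) (hk2 : 2 ≤ k) (hkn : k ≤ n)
    (a b : Fin k → α)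
    (hdist : ((List.finRange k).flatMap (fun i => [a i, b i])).Nodup)
    (hnc : NoncrossingList G ((List.finRange k).flatMap (fun i => [a i, b i])))
    (A B : Finset α) (hA : A = Finset.univ.image a) (hB : B = Finset.univ.image b)
    (j : Fin k) :
    ∑ W ∈ B.powerset.filter (fun W => Even W.card),
        pmSum G w (Finset.univ \ W) * pmSum G w (Finset.univ \ (A ∪ (B \ W))) =
    ∑ Y ∈ B.powerset.filter (fun Y => Odd Y.card),
        pmSum G w (Finset.univ \ ({a j} ∪ Y)) *
          pmSum G w (Finset.univ \ ((A \ {a j}) ∪ (B \ Y))) := by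
  classical
  have hTm : ∀ x, x ∈ A ∪ B ↔ x ∈ (List.finRange k).flatMap (fun i => [a i, b i]) := by
    intro x
    simp only [hA, hB, Finset.mem_union, Finset.mem_image, Finset.mem_univ, true_and,
      List.mem_flatMap, List.mem_finRange, List.mem_cons, List.not_mem_nil, or_false]
    constructor
    · rintro (⟨i, rfl⟩ | ⟨i, rfl⟩)
      · exact ⟨i, Or.inl rfl⟩
      · exact ⟨i, Or.inr rfl⟩
    · rintro ⟨i, rfl | rfl⟩
      · exact Or.inl ⟨i, rfl⟩
      · exact Or.inr ⟨i, rfl⟩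
  have hab : ∀ i i', a i ≠ b i' := by
    intro i i' h
    have g1 := (yyz_get a b (List.finRange k) i.val).1
    have g2 := (yyz_get a b (List.finRange k) i'.val).2
    have hlen : ((List.finRange k).flatMap (fun i => [a i, b i])).length = 2 * k := by
      simp [List.length_flatMap, mul_comm]
    have l1 : 2 * i.val < ((List.finRange k).flatMap (fun i => [a i, b i])).length := by
      have := i.2; omega
    have := (List.getElem?_inj (j := 2 * i'.val + 1) l1 hdist).1 (by rw [g1, g2]; simp [h])
    omega
  have hdAB : Disjoint A B := by
    rw [Finset.disjoint_left, hA, hB]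
    intro x hx hx'
    simp only [Finset.mem_image, Finset.mem_univ, true_and] at hx hx'
    obtain ⟨i, rfl⟩ := hx
    obtain ⟨i', h⟩ := hx'
    exact hab i i' h.symm
  have hajA : a j ∈ A := by rw [hA]; simp
  have hajB : a j ∉ B := Finset.disjoint_left.1 hdAB hajA
  have hbB : ∀ i, b i ∈ B := by intro i; rw [hB]; simp
  have hstep : ∀ (X1 X2 : Finset α), Disjoint X1 X2 → X1 ∪ X2 = A ∪ B →
      ∀ m1 m2 : Finset (Sym2 α), IsPMOn G (Finset.univ \ X1) m1 →
      IsPMOn G (Finset.univ \ X2) m2 →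
      ∃ y ∈ B, yyzC (m1 ∪ m2) (a j) ∩ B = {y} ∧
        IsPMOn G (Finset.univ \ symmDiff X1 {a j, y}) (yyzSwap (yyzC (m1 ∪ m2) (a j)) m1 m2) ∧
        IsPMOn G (Finset.univ \ symmDiff X2 {a j, y}) (yyzSwap (yyzC (m1 ∪ m2) (a j)) m2 m1) := by
    intro X1 X2 hd hT m1 m2 h1 h2
    obtain ⟨i, hi⟩ := yyz_key G k a b hdist hnc (A ∪ B) X1 X2 hTm hd hT m1 m2 h1 h2 j
    have hi' : ∀ x, x ∈ X1 ∨ x ∈ X2 → (x ∈ yyzC (m1 ∪ m2) (a j) ↔ x = a j ∨ x = b i) := by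
      intro x hx; exact hi x (by rw [← hT]; exact Finset.mem_union.2 hx)
    have hdd : ∀ x, x ∈ X1 → x ∉ X2 := fun x hx => Finset.disjoint_left.1 hd hx
    have hin1 : a j ∈ X1 ∨ a j ∈ X2 := by
      rw [← Finset.mem_union, hT]; exact Finset.mem_union_left _ hajA
    have hin2 : b i ∈ X1 ∨ b i ∈ X2 := by
      rw [← Finset.mem_union, hT]; exact Finset.mem_union_right _ (hbB i)
    have hcl := yyz_C_closed (m1 ∪ m2) (a j)
    refine ⟨b i, hbB i, ?_, ?_, ?_⟩
    · ext x
      simp only [Finset.mem_inter, Finset.mem_singleton]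
      constructor
      · rintro ⟨hx, hxB⟩
        rcases (hi x (Finset.mem_union_right _ hxB)).1 hx with rfl | h
        · exact absurd hxB hajB
        · exact h
      · rintro rfl
        exact ⟨(hi _ (Finset.mem_union_right _ (hbB i))).2 (Or.inr rfl), hbB i⟩
    · refine yyz_pm_swap G _ _ _ _ m1 m2 h1 h2 hcl ?_
      intro v
      have u1 := hi' v
      have u2 := hdd v
      clear hi hi' hdd hcl
      simp only [Finset.mem_sdiff, Finset.mem_univ, true_and, Finset.mem_symmDiff,
        Finset.mem_insert, Finset.mem_singleton]
      clear h1 h2 hTm hab hdist hnc hT hd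
      grind
    · refine yyz_pm_swap G _ _ _ _ m2 m1 h2 h1 (by rw [Finset.union_comm m2 m1]; exact hcl) ?_
      intro v
      have u1 := hi' v
      have u2 := hdd v
      clear hi hi' hdd hcl
      simp only [Finset.mem_sdiff, Finset.mem_univ, true_and, Finset.mem_symmDiff,
        Finset.mem_insert, Finset.mem_singleton]
      clear h1 h2 hTm hab hdist hnc hT hd
      grind
  have hL : ∀ W ⊆ B, Disjoint W (A ∪ (B \ W)) ∧ W ∪ (A ∪ (B \ W)) = A ∪ B := by
    intro W hW
    constructor
    · rw [Finset.disjoint_left]; intro x hx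
      have := hW hx
      have := Finset.disjoint_right.1 hdAB this
      simp; tauto
    · ext x; have := @hW x; simp; tauto
  have hR : ∀ Y ⊆ B, Disjoint ({a j} ∪ Y) ((A \ {a j}) ∪ (B \ Y)) ∧
      ({a j} ∪ Y) ∪ ((A \ {a j}) ∪ (B \ Y)) = A ∪ B := by
    intro Y hY
    constructor
    · rw [Finset.disjoint_left]; intro x hx
      have := @hY x
      have : x ∈ B → x ∉ A := fun h => Finset.disjoint_right.1 hdAB h
      simp at hx ⊢
      rcases hx with rfl | hx <;> tauto
    · ext x; have := @hY x; simp
      by_cases e : x = a j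
      · subst e; tauto
      · tauto
  have hsub : ∀ W ⊆ B, ∀ y ∈ B, symmDiff W {y} ⊆ B := by
    intro W hW y hy x hx
    rw [Finset.mem_symmDiff, Finset.mem_singleton] at hx
    rcases hx with h | h
    · exact hW h.1
    · rw [h.1]; exact hy
  have q1 : ∀ W ⊆ B, ∀ y ∈ B, symmDiff W {a j, y} = {a j} ∪ symmDiff W {y} := by
    intro W hW y hy
    have : y ≠ a j := fun h => hajB (h ▸ hy)
    have : a j ∉ W := fun h => hajB (hW h)
    ext x
    simp only [Finset.mem_symmDiff, Finset.mem_union, Finset.mem_insert, Finset.mem_singleton]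
    grind
  have q2 : ∀ W ⊆ B, ∀ y ∈ B, symmDiff (A ∪ (B \ W)) {a j, y} =
      (A \ {a j}) ∪ (B \ symmDiff W {y}) := by
    intro W hW y hy
    have h1 : y ≠ a j := fun h => hajB (h ▸ hy)
    have h2 : y ∉ A := Finset.disjoint_right.1 hdAB hy
    ext x
    have h3 := @hW x
    simp only [Finset.mem_symmDiff, Finset.mem_union, Finset.mem_insert, Finset.mem_singleton,
      Finset.mem_sdiff]
    grind
  have q3 : ∀ W ⊆ B, ∀ y ∈ B, symmDiff ({a j} ∪ W) {a j, y} = symmDiff W {y} := by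
    intro W hW y hy
    have : y ≠ a j := fun h => hajB (h ▸ hy)
    have : a j ∉ W := fun h => hajB (hW h)
    ext x
    simp only [Finset.mem_symmDiff, Finset.mem_union, Finset.mem_insert, Finset.mem_singleton]
    grind
  have q4 : ∀ W ⊆ B, ∀ y ∈ B, symmDiff ((A \ {a j}) ∪ (B \ W)) {a j, y} =
      A ∪ (B \ symmDiff W {y}) := by
    intro W hW y hy
    have h1 : y ≠ a j := fun h => hajB (h ▸ hy)
    have h2 : y ∉ A := Finset.disjoint_right.1 hdAB hy
    ext x
    have h3 := @hW x
    simp only [Finset.mem_symmDiff, Finset.mem_union, Finset.mem_insert, Finset.mem_singleton,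
      Finset.mem_sdiff]
    grind
  simp only [pmSum, Finset.sum_mul_sum, ← Finset.sum_product']
  rw [Finset.sum_sigma', Finset.sum_sigma']
  let F : (Σ _ : Finset α, Finset (Sym2 α) × Finset (Sym2 α)) →
      (Σ _ : Finset α, Finset (Sym2 α) × Finset (Sym2 α)) := fun p =>
    ⟨symmDiff p.1 (yyzC (p.2.1 ∪ p.2.2) (a j) ∩ B),
      (yyzSwap (yyzC (p.2.1 ∪ p.2.2) (a j)) p.2.1 p.2.2,
       yyzSwap (yyzC (p.2.1 ∪ p.2.2) (a j)) p.2.2 p.2.1)⟩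
  have hFF : ∀ p, F (F p) = p := by
    rintro ⟨W, m1, m2⟩
    simp only [F, yyz_swap_union, yyz_swap_swap, symmDiff_symmDiff_cancel_right]
  refine Finset.sum_bij' (fun p _ => F p) (fun p _ => F p) ?_ ?_ (fun p _ => hFF p)
    (fun p _ => hFF p) ?_
  · rintro ⟨W, m1, m2⟩ hp
    simp only [Finset.mem_sigma, Finset.mem_filter, Finset.mem_powerset, Finset.mem_product,
      Finset.mem_univ, true_and, F] at hp ⊢
    obtain ⟨⟨hW, hE⟩, h1, h2⟩ := hp
    obtain ⟨y, hy, hCy, k1, k2⟩ := hstep _ _ (hL W hW).1 (hL W hW).2 m1 m2 h1 h2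
    rw [q1 W hW y hy] at k1
    rw [q2 W hW y hy] at k2
    rw [hCy]
    exact ⟨⟨hsub W hW y hy, Nat.not_even_iff_odd.1 (fun h => (yyz_parity W y).1 h hE)⟩, k1, k2⟩
  · rintro ⟨W, m1, m2⟩ hp
    simp only [Finset.mem_sigma, Finset.mem_filter, Finset.mem_powerset, Finset.mem_product,
      Finset.mem_univ, true_and, F] at hp ⊢
    obtain ⟨⟨hW, hE⟩, h1, h2⟩ := hp
    obtain ⟨y, hy, hCy, k1, k2⟩ := hstep _ _ (hR W hW).1 (hR W hW).2 m1 m2 h1 h2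
    rw [q3 W hW y hy] at k1
    rw [q4 W hW y hy] at k2
    rw [hCy]
    exact ⟨⟨hsub W hW y hy, (yyz_parity W y).2 (Nat.not_even_iff_odd.2 hE)⟩, k1, k2⟩
  · rintro ⟨W, m1, m2⟩ hp
    exact (yyz_swap_prod w _ m1 m2).symm
end

section
/- Let G be a finite simple graph with 2n vertices and edge weights in a commutative ring, let 2 ≤ k ≤ n, and let a_1, b_1, a_2, b_2, …, a_k, b_k be distinct vertices such that G is noncrossing with respect to the cyclic sequence (a_1, b_1, a_2, b_2, …, a_k, b_k). Set A = {a_1,…,a_k} and B = {b_1,…,b_k}. Then for every partition of A into two disjoint subsets A_1, A_2: Σ_{W⊆B, |W| even} M(G−W)·M(G−A−(B∖W)) = Σ_{Y⊆B, |Y| ≡ |A_1| (mod 2)} M(G−A_1−Y)·M(G−A_2−(B∖Y)). -/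
namespace CondAux

variable {α : Type*}

/-- union graph of two edge sets -/
def H (m₁ m₂ : Finset (Sym2 α)) : SimpleGraph α where
  Adj u v := u ≠ v ∧ (s(u, v) ∈ m₁ ∨ s(u, v) ∈ m₂)
  symm := ⟨by
    intro u v h
    rw [Sym2.eq_swap]
    exact ⟨h.1.symm, h.2⟩⟩
  loopless := ⟨fun u h => h.1 rfl⟩

theorem closed_of_reach {m₁ m₂ : Finset (Sym2 α)} {T : Set α} {e : Sym2 α}
    (he : e ∈ m₁ ∨ e ∈ m₂) {u v : α} (hu : u ∈ e) (hv : v ∈ e)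
    (h : ∃ t ∈ T, (H m₁ m₂).Reachable t u) : ∃ t ∈ T, (H m₁ m₂).Reachable t v := by
  obtain ⟨t, ht, hr⟩ := h
  refine ⟨t, ht, ?_⟩
  by_cases huv : u = v
  · exact huv ▸ hr
  · have : e = s(u, v) := (Sym2.mem_and_mem_iff huv).1 ⟨hu, hv⟩
    subst this
    exact hr.trans (SimpleGraph.Adj.reachable (⟨huv, he⟩ : (H m₁ m₂).Adj u v))

theorem pm_unique {G : SimpleGraph α} {s : Finset α} {m : Finset (Sym2 α)} (h : IsPMOn G s m)
    {u x y : α} (hx : s(u, x) ∈ m) (hy : s(u, y) ∈ m) : x = y := by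
  have hu : u ∈ s := (h.1 _ hx).2 u (by simp)
  have := (h.2 u hu).unique ⟨hx, by simp⟩ ⟨hy, by simp⟩
  exact Sym2.congr_right.1 this

theorem pm_even [DecidableEq α] {G : SimpleGraph α} {s : Finset α} {m : Finset (Sym2 α)}
    (h : IsPMOn G s m) : Even s.card := by
  have : s = m.biUnion (fun e => e.toFinset) := by
    ext v
    simp only [Finset.mem_biUnion, Sym2.mem_toFinset]
    constructor
    · intro hv
      obtain ⟨e, he, -⟩ := h.2 v hv
      exact ⟨e, he⟩
    · rintro ⟨e, he, hv⟩
      exact (h.1 e he).2 v hv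
  rw [this, Finset.card_biUnion, Finset.sum_congr rfl (g := fun _ => 2)]
  · simp
  · intro e he
    exact Sym2.card_toFinset_of_not_isDiag e (G.not_isDiag_of_mem_edgeSet (h.1 e he).1)
  · intro e he f hf hef
    rw [Function.onFun, Finset.disjoint_left] 
    intro v hv hv'
    rw [Sym2.mem_toFinset] at hv hv'
    exact hef ((h.2 v ((h.1 e he).2 v hv)).unique ⟨he, hv⟩ ⟨hf, hv'⟩)

open Classical in
/-- exchange -/
noncomputable def glue (C : Finset α) (m₁ m₂ : Finset (Sym2 α)) : Finset (Sym2 α) :=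
  m₁.filter (fun e => ¬ ∃ v ∈ e, v ∈ C) ∪ m₂.filter (fun e => ∃ v ∈ e, v ∈ C)

theorem mem_glue {C : Finset α} {m₁ m₂ : Finset (Sym2 α)} {e : Sym2 α} :
    e ∈ glue C m₁ m₂ ↔ (e ∈ m₁ ∧ ¬ ∃ v ∈ e, v ∈ C) ∨ (e ∈ m₂ ∧ ∃ v ∈ e, v ∈ C) := by
  classical
  unfold glue
  rw [Finset.mem_union, Finset.mem_filter, Finset.mem_filter]

theorem glue_glue (C : Finset α) (m₁ m₂ : Finset (Sym2 α)) :
    glue C (glue C m₁ m₂) (glue C m₂ m₁) = m₁ := by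
  ext e
  simp only [mem_glue]
  by_cases h : ∃ v ∈ e, v ∈ C
  · simp only [h, not_true, and_false, and_true, false_or, or_false]
  · simp only [h, not_false_eq_true, and_false, and_true, or_false]

theorem H_glue (C : Finset α) (m₁ m₂ : Finset (Sym2 α)) :
    H (glue C m₁ m₂) (glue C m₂ m₁) = H m₁ m₂ := by
  ext u v
  simp only [H, mem_glue]
  tauto

theorem prod_glue {R : Type*} [CommRing R] (w : Sym2 α → R) (C : Finset α)
    (m₁ m₂ : Finset (Sym2 α)) :
    (∏ e ∈ glue C m₁ m₂, w e) * (∏ e ∈ glue C m₂ m₁, w e) =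
      (∏ e ∈ m₁, w e) * (∏ e ∈ m₂, w e) := by
  classical
  have key : ∀ m₁ m₂ : Finset (Sym2 α), (∏ e ∈ glue C m₁ m₂, w e) =
      (∏ e ∈ m₁ with ¬ ∃ v ∈ e, v ∈ C, w e) * (∏ e ∈ m₂ with ∃ v ∈ e, v ∈ C, w e) := by
    intro m₁ m₂
    unfold glue
    rw [← Finset.prod_union]
    rw [Finset.disjoint_left]
    intro e he he'
    exact (Finset.mem_filter.1 he).2 (Finset.mem_filter.1 he').2
  rw [key, key, ← Finset.prod_filter_mul_prod_filter_not m₁ (fun e => ∃ v ∈ e, v ∈ C),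
    ← Finset.prod_filter_mul_prod_filter_not m₂ (fun e => ∃ v ∈ e, v ∈ C)]
  ring

theorem pm_glue [DecidableEq α] {G : SimpleGraph α} {s₁ s₂ C : Finset α}
    {m₁ m₂ : Finset (Sym2 α)} (h₁ : IsPMOn G s₁ m₁) (h₂ : IsPMOn G s₂ m₂)
    (hC : ∀ e, (e ∈ m₁ ∨ e ∈ m₂) → ∀ u ∈ e, ∀ v ∈ e, u ∈ C → v ∈ C) :
    IsPMOn G ((s₁ \ C) ∪ (s₂ ∩ C)) (glue C m₁ m₂) := by
  constructor
  · intro e he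
    rw [mem_glue] at he
    rcases he with ⟨he, hn⟩ | ⟨he, u, hu, huC⟩
    · refine ⟨(h₁.1 e he).1, fun v hv => ?_⟩
      have := (h₁.1 e he).2 v hv
      have : v ∉ C := fun h => hn ⟨v, hv, h⟩
      simp [*]
    · refine ⟨(h₂.1 e he).1, fun v hv => ?_⟩
      have := (h₂.1 e he).2 v hv
      have : v ∈ C := hC e (Or.inr he) u hu v hv huC
      simp [*]
  · intro v hv
    simp only [Finset.mem_union, Finset.mem_sdiff, Finset.mem_inter] at hv
    rcases hv with ⟨hv, hn⟩ | ⟨hv, hvC⟩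
    · obtain ⟨e, ⟨he, hve⟩, hu⟩ := h₁.2 v hv
      refine ⟨e, ⟨mem_glue.2 (Or.inl ⟨he, ?_⟩), hve⟩, ?_⟩
      · rintro ⟨u, hu, huC⟩
        exact hn (hC e (Or.inl he) u hu v hve huC)
      · rintro f ⟨hf, hvf⟩
        rcases mem_glue.1 hf with ⟨hf, -⟩ | ⟨hf, u, hu, huC⟩
        · exact hu f ⟨hf, hvf⟩
        · exact absurd (hC f (Or.inr hf) u hu v hvf huC) hn
    · obtain ⟨e, ⟨he, hve⟩, hu⟩ := h₂.2 v hv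
      refine ⟨e, ⟨mem_glue.2 (Or.inr ⟨he, v, hve, hvC⟩), hve⟩, ?_⟩
      rintro f ⟨hf, hvf⟩
      rcases mem_glue.1 hf with ⟨hf, hn⟩ | ⟨hf, -⟩
      · exact absurd ⟨v, hvf, hvC⟩ hn
      · exact hu f ⟨hf, hvf⟩

theorem pm_restrict [DecidableEq α] {G : SimpleGraph α} {s C : Finset α}
    {m : Finset (Sym2 α)} (h : IsPMOn G s m)
    (hC : ∀ e ∈ m, ∀ u ∈ e, ∀ v ∈ e, u ∈ C → v ∈ C) : Even (s ∩ C).card := by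
  have h0 : IsPMOn G ∅ ∅ := ⟨by simp, by simp⟩
  have := pm_even (pm_glue h0 h (C := C) (by
    rintro e (he | he)
    · simp at he
    · exact hC e he))
  simpa using this

/-- internal vertices of a path have two distinct neighbours on the path -/
theorem path_internal {G : SimpleGraph α} {x y u : α} {p : G.Walk x y} (hp : p.IsPath)
    (hu : u ∈ p.support) (hx : u ≠ x) (hy : u ≠ y) :
    ∃ c ∈ p.support, ∃ d ∈ p.support, c ≠ d ∧ G.Adj u c ∧ G.Adj u d := by
  obtain ⟨i, hi, hil⟩ := SimpleGraph.Walk.mem_support_iff_exists_getVert.1 hu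
  have h0 : i ≠ 0 := by
    rintro rfl
    exact hx (by simpa using hi.symm)
  have h1 : i ≠ p.length := by
    rintro rfl
    exact hy (by simpa using hi.symm)
  refine ⟨p.getVert (i - 1), p.getVert_mem_support _, p.getVert (i + 1),
    p.getVert_mem_support _, ?_, ?_, ?_⟩
  · intro h
    have := hp.getVert_injOn (by rw [Set.mem_ofPred]; lia) (by rw [Set.mem_ofPred]; lia) h
    lia
  · have := p.adj_getVert_succ (i := i - 1) (by lia)
    rw [show i - 1 + 1 = i by lia, hi] at this
    exact this.symm
  · have := p.adj_getVert_succ (i := i) (by lia)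
    rwa [hi] at this

theorem path_start {G : SimpleGraph α} {x y : α} (p : G.Walk x y) (hxy : x ≠ y) :
    ∃ c ∈ p.support, G.Adj x c := by
  cases p with
  | nil => exact absurd rfl hxy
  | cons h q => exact ⟨_, by simp, h⟩

theorem three_term {G : SimpleGraph α} {T : Set α}
    (h1 : ∀ t ∈ T, ∀ c d, G.Adj t c → G.Adj t d → c = d)
    (h2 : ∀ u c d e, G.Adj u c → G.Adj u d → G.Adj u e → c = d ∨ c = e ∨ d = e)
    {x y z : α} (hx : x ∈ T) (hy : y ∈ T) (hz : z ∈ T) (hxy : x ≠ y) (hxz : z ≠ x) (hyz : z ≠ y)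
    (rxy : G.Reachable x y) (rxz : G.Reachable x z) : False := by
  obtain ⟨p, hp⟩ := rxy.exists_isPath
  have hcl : ∀ u ∈ p.support, ∀ v, G.Adj u v → v ∈ p.support := by
    intro u hu v huv
    by_cases hux : u = x
    · subst hux
      obtain ⟨c, hc, hadj⟩ := path_start p hxy
      rwa [h1 u hx v c huv hadj]
    by_cases huy : u = y
    · subst huy
      obtain ⟨c, hc, hadj⟩ := path_start p.reverse hxy.symm
      rw [h1 u hy v c huv hadj]
      simpa using hc
    · obtain ⟨c, hc, d, hd, hcd, ac, ad⟩ := path_internal hp hu hux huy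
      rcases h2 u v c d huv ac ad with h | h | h
      · rwa [h]
      · rwa [h]
      · exact absurd h hcd
  obtain ⟨q⟩ := rxz
  have : ∀ (u v : α) (q : G.Walk u v), u ∈ p.support → v ∈ p.support := by
    intro u v q
    induction q with
    | nil => exact id
    | cons h q ih => exact fun hu => ih (hcl _ hu _ h)
  have hzp := this x z q p.start_mem_support
  obtain ⟨c, hc, d, hd, hcd, ac, ad⟩ := path_internal hp hzp hxz hyz
  exact hcd (h1 z hz c d ac ad)

theorem parity_key [Fintype α] [DecidableEq α] {G : SimpleGraph α} {L : List α}
    (hnd : L.Nodup) (hnc : NoncrossingList G L)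
    {s₁ s₂ : Finset α} {m₁ m₂ : Finset (Sym2 α)} (p₁ : IsPMOn G s₁ m₁) (p₂ : IsPMOn G s₂ m₂)
    (hun : ∀ x, x ∈ s₁ ∨ x ∈ s₂) (hL : ∀ x, x ∈ L ↔ ¬ (x ∈ s₁ ∧ x ∈ s₂))
    (i j : Fin L.length) (hij : i < j) (hr : (H m₁ m₂).Reachable (L.get i) (L.get j)) :
    ¬ Even (j.val - i.val) := by
  classical
  intro hev
  have hle : H m₁ m₂ ≤ G := by
    intro u v h
    rcases h.2 with h | h
    · exact (p₁.1 _ h).1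
    · exact (p₂.1 _ h).1
  have inj : ∀ x y, L.get x = L.get y → x = y := fun x y h => hnd.injective_get h
  have h1 : ∀ t ∈ {x | x ∈ L}, ∀ c d, (H m₁ m₂).Adj t c → (H m₁ m₂).Adj t d → c = d := by
    intro t ht c d hc hd
    have ht := (hL t).1 ht
    rcases hc.2 with hc | hc <;> rcases hd.2 with hd | hd
    · exact pm_unique p₁ hc hd
    · exact absurd ⟨(p₁.1 _ hc).2 t (by simp), (p₂.1 _ hd).2 t (by simp)⟩ ht
    · exact absurd ⟨(p₁.1 _ hd).2 t (by simp), (p₂.1 _ hc).2 t (by simp)⟩ ht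
    · exact pm_unique p₂ hc hd
  have h2 : ∀ u c d e, (H m₁ m₂).Adj u c → (H m₁ m₂).Adj u d → (H m₁ m₂).Adj u e →
      c = d ∨ c = e ∨ d = e := by
    intro u c d e hc hd he
    rcases hc.2 with hc | hc <;> rcases hd.2 with hd | hd <;> rcases he.2 with he | he
    · exact Or.inl (pm_unique p₁ hc hd)
    · exact Or.inl (pm_unique p₁ hc hd)
    · exact Or.inr (Or.inl (pm_unique p₁ hc he))
    · exact Or.inr (Or.inr (pm_unique p₂ hd he))
    · exact Or.inr (Or.inr (pm_unique p₁ hd he))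
    · exact Or.inr (Or.inl (pm_unique p₂ hc he))
    · exact Or.inl (pm_unique p₂ hc hd)
    · exact Or.inl (pm_unique p₂ hc hd)
  have h3 : ∀ x y z : Fin L.length, x ≠ y → z ≠ x → z ≠ y →
      (H m₁ m₂).Reachable (L.get x) (L.get y) → (H m₁ m₂).Reachable (L.get x) (L.get z) →
      False := by
    intro x y z hxy hzx hzy
    exact three_term h1 h2 (L.get_mem x) (L.get_mem y) (L.get_mem z)
      (fun h => hxy (inj _ _ h)) (fun h => hzx (inj _ _ h)) (fun h => hzy (inj _ _ h))
  have hav : ∀ {x y : Fin L.length} (p : (H m₁ m₂).Walk (L.get x) (L.get y)), p.IsPath →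
      ∀ u ∈ p.support, u ≠ L.get x → u ≠ L.get y → u ∉ {x | x ∈ L} := by
    intro x y p hp u hu hux huy huL
    obtain ⟨c, hc, d, hd, hcd, ac, ad⟩ := path_internal hp hu hux huy
    exact hcd (h1 u huL c d ac ad)
  have hdp : ∀ x y z t : Fin L.length, (H m₁ m₂).Reachable (L.get x) (L.get y) →
      (H m₁ m₂).Reachable (L.get z) (L.get t) → ¬ (H m₁ m₂).Reachable (L.get x) (L.get z) →
      DisjointPaths G {x | x ∈ L} (L.get x) (L.get y) (L.get z) (L.get t) := by
    intro x y z t rp rq rn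
    obtain ⟨p, hp⟩ := rp.exists_isPath
    obtain ⟨q, hq⟩ := rq.exists_isPath
    refine ⟨p.mapLe hle, q.mapLe hle, hp.mapLe hle, hq.mapLe hle, ?_, ?_, ?_⟩
    · simp only [SimpleGraph.Walk.support_mapLe_eq_support]
      intro u hu hu'
      exact rn (⟨p.takeUntil u hu⟩ |> fun (h : (H m₁ m₂).Reachable _ _) =>
        h.trans (SimpleGraph.Reachable.symm ⟨q.takeUntil u hu'⟩))
    · simpa only [SimpleGraph.Walk.support_mapLe_eq_support] using hav p hp
    · simpa only [SimpleGraph.Walk.support_mapLe_eq_support] using hav q hq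
  set T : Set α := {x | ∃ m : Fin L.length, i < m ∧ m < j ∧ L.get m = x} with hT
  set Z : Finset α := Finset.univ.filter (fun v => ∃ t ∈ T, (H m₁ m₂).Reachable t v) with hZ
  have e1 : Even (s₁ ∩ Z).card := pm_restrict p₁ (by
    intro e he u hu v hv h
    simp only [hZ, Finset.mem_filter, Finset.mem_univ, true_and] at h ⊢
    exact closed_of_reach (Or.inl he) hu hv h)
  have e2 : Even (s₂ ∩ Z).card := pm_restrict p₂ (by
    intro e he u hu v hv h
    simp only [hZ, Finset.mem_filter, Finset.mem_univ, true_and] at h ⊢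
    exact closed_of_reach (Or.inr he) hu hv h)
  have e3 : (s₁ ∩ Z).card + (s₂ ∩ Z).card = Z.card + ((s₁ ∩ s₂) ∩ Z).card := by
    rw [← Finset.card_union_add_card_inter]
    congr 2
    · ext x
      have := hun x
      simp only [Finset.mem_union, Finset.mem_inter]
      tauto
    · ext x
      simp only [Finset.mem_inter]
      tauto
  have e4 : (Z.filter (fun x => x ∈ L)).card + ((s₁ ∩ s₂) ∩ Z).card = Z.card := by
    rw [← Finset.card_filter_add_card_filter_not (s := Z) (fun x => x ∈ L)]
    congr 2
    ext x
    have := hL x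
    simp only [Finset.mem_inter, Finset.mem_filter]
    tauto
  have e5 : Z.filter (fun x => x ∈ L) = (Finset.Ioo i j).image L.get := by
    ext x
    simp only [hZ, hT, Finset.mem_filter, Finset.mem_univ, true_and, Finset.mem_image,
      Finset.mem_Ioo]
    constructor
    · rintro ⟨⟨t, ⟨m, him, hmj, rfl⟩, hrt⟩, hxL⟩
      obtain ⟨l, rfl⟩ := List.mem_iff_get.1 hxL
      refine ⟨l, ?_, rfl⟩
      have hmi : ¬ (H m₁ m₂).Reachable (L.get i) (L.get m) := fun h =>
        h3 i j m hij.ne him.ne' hmj.ne hr h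
      have hli : l ≠ i := by
        rintro rfl
        exact hmi hrt.symm
      have hlj : l ≠ j := by
        rintro rfl
        exact hmi (hr.trans hrt.symm)
      by_contra hcon
      rcases lt_trichotomy l i with h | h | h
      · exact hnc l i m j h him hmj (hdp l m i j hrt.symm hr
          (fun h' => hmi (h'.symm.trans hrt.symm)))
      · exact hli h
      · rcases lt_trichotomy l j with h' | h' | h'
        · exact hcon ⟨h, h'⟩
        · exact hlj h'
        · exact hnc i m j l him hmj h' (hdp i j m l hr hrt hmi)
    · rintro ⟨m, ⟨him, hmj⟩, rfl⟩
      exact ⟨⟨_, ⟨m, him, hmj, rfl⟩, SimpleGraph.Reachable.refl _⟩, L.get_mem m⟩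
  have e6 : (Z.filter (fun x => x ∈ L)).card = j.val - i.val - 1 := by
    rw [e5, Finset.card_image_of_injective _ hnd.injective_get, Fin.card_Ioo]
  have : i.val < j.val := hij
  rw [Nat.even_iff] at hev e1 e2
  lia

theorem flat_get {β : Type*} (f g : β → α) (l : List β) (i : ℕ) :
    (l.flatMap (fun x => [f x, g x]))[2 * i]? = l[i]?.map f := by
  induction l generalizing i with
  | nil => simp
  | cons x l ih =>
    cases i with
    | zero => simp
    | succ i =>
      rw [show 2 * (i + 1) = 2 * i + 1 + 1 by ring]
      simpa using ih i

theorem sep_key [Fintype α] [DecidableEq α] {G : SimpleGraph α} {k : ℕ} {a b : Fin k → α}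
    (hdist : ((List.finRange k).flatMap (fun i => [a i, b i])).Nodup)
    (hnc : NoncrossingList G ((List.finRange k).flatMap (fun i => [a i, b i])))
    {s₁ s₂ : Finset α} {m₁ m₂ : Finset (Sym2 α)} (p₁ : IsPMOn G s₁ m₁) (p₂ : IsPMOn G s₂ m₂)
    (hun : ∀ x, x ∈ s₁ ∨ x ∈ s₂)
    (hL : ∀ x, (x ∈ Finset.univ.image a ∨ x ∈ Finset.univ.image b) ↔ ¬ (x ∈ s₁ ∧ x ∈ s₂))
    {x y : α} (hx : x ∈ Finset.univ.image a) (hy : y ∈ Finset.univ.image a)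
    (hr : (H m₁ m₂).Reachable x y) : x = y := by
  have main : ∀ i j : Fin k, i < j → ¬ (H m₁ m₂).Reachable (a i) (a j) := by
    intro i j hij hr
    set L := (List.finRange k).flatMap (fun i => [a i, b i]) with hLdef
    have hg : ∀ i : Fin k, L[2 * i.val]? = some (a i) := by
      intro i
      rw [hLdef, flat_get]
      simp
    have hL' : ∀ x, x ∈ L ↔ ¬ (x ∈ s₁ ∧ x ∈ s₂) := by
      intro x
      rw [← hL x, hLdef]
      simp only [List.mem_flatMap, List.mem_finRange, true_and, Finset.mem_image,
        Finset.mem_univ, List.mem_cons, List.not_mem_nil, or_false, exists_or]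
      simp only [eq_comm]
    obtain ⟨li, hi⟩ := List.getElem?_eq_some_iff.1 (hg i)
    obtain ⟨lj, hj⟩ := List.getElem?_eq_some_iff.1 (hg j)
    refine parity_key hdist hnc p₁ p₂ hun hL' ⟨2 * i.val, li⟩ ⟨2 * j.val, lj⟩ ?_ ?_ ?_
    · rw [Fin.mk_lt_mk]
      have : i.val < j.val := hij
      lia
    · simp only [List.get_eq_getElem, hi, hj]
      exact hr
    · simp only [← Nat.mul_sub]
      exact even_two_mul _
  simp only [Finset.mem_image, Finset.mem_univ, true_and] at hx hy
  obtain ⟨i, rfl⟩ := hx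
  obtain ⟨j, rfl⟩ := hy
  rcases lt_trichotomy i j with h | h | h
  · exact absurd hr (main i j h)
  · rw [h]
  · exact absurd hr.symm (main j i h)

open Classical in
/-- union of the components meeting `S` -/
noncomputable def comp [Fintype α] (S : Finset α) (m₁ m₂ : Finset (Sym2 α)) : Finset α :=
  Finset.univ.filter (fun v => ∃ t ∈ (S : Set α), (H m₁ m₂).Reachable t v)

theorem mem_comp [Fintype α] {S : Finset α} {m₁ m₂ : Finset (Sym2 α)} {v : α} :
    v ∈ comp S m₁ m₂ ↔ ∃ t ∈ (S : Set α), (H m₁ m₂).Reachable t v := by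
  simp [comp]

theorem comp_closed [Fintype α] (S : Finset α) (m₁ m₂ : Finset (Sym2 α)) :
    ∀ e, (e ∈ m₁ ∨ e ∈ m₂) → ∀ u ∈ e, ∀ v ∈ e, u ∈ comp S m₁ m₂ → v ∈ comp S m₁ m₂ := by
  intro e he u hu v hv h
  rw [mem_comp] at h ⊢
  exact closed_of_reach he hu hv h

theorem comp_glue [Fintype α] (S C : Finset α) (m₁ m₂ : Finset (Sym2 α)) :
    comp S (glue C m₁ m₂) (glue C m₂ m₁) = comp S m₁ m₂ := by
  unfold comp
  rw [H_glue]

/-- the exchange map -/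
noncomputable def flip [Fintype α] [DecidableEq α] (B S : Finset α)
    (p : Finset α × Finset (Sym2 α) × Finset (Sym2 α)) :
    Finset α × Finset (Sym2 α) × Finset (Sym2 α) :=
  let C := comp S p.2.1 p.2.2
  ((p.1 \ C) ∪ ((B \ p.1) ∩ C), glue C p.2.1 p.2.2, glue C p.2.2 p.2.1)

theorem flip_flip [Fintype α] [DecidableEq α] (B S : Finset α)
    (p : Finset α × Finset (Sym2 α) × Finset (Sym2 α)) (hp : p.1 ⊆ B) :
    flip B S (flip B S p) = p := by
  obtain ⟨Y, m₁, m₂⟩ := p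
  simp only [flip, comp_glue, glue_glue, Prod.mk.injEq, and_true]
  ext x
  have := @hp x
  simp only [Finset.mem_union, Finset.mem_sdiff, Finset.mem_inter]
  simp only at this
  tauto

open Classical in
/-- triples -/
noncomputable def triples [Fintype α] [DecidableEq α] (G : SimpleGraph α) (B S₁ S₂ : Finset α) :
    Finset (Finset α × Finset (Sym2 α) × Finset (Sym2 α)) :=
  Finset.univ.filter (fun p => p.1 ⊆ B ∧ IsPMOn G (Finset.univ \ (S₁ ∪ p.1)) p.2.1 ∧
    IsPMOn G (Finset.univ \ (S₂ ∪ (B \ p.1))) p.2.2)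

theorem mem_triples [Fintype α] [DecidableEq α] {G : SimpleGraph α} {B S₁ S₂ : Finset α}
    {p : Finset α × Finset (Sym2 α) × Finset (Sym2 α)} :
    p ∈ triples G B S₁ S₂ ↔ p.1 ⊆ B ∧ IsPMOn G (Finset.univ \ (S₁ ∪ p.1)) p.2.1 ∧
    IsPMOn G (Finset.univ \ (S₂ ∪ (B \ p.1))) p.2.2 := by
  simp [triples]

theorem sum_eq {R : Type*} [Fintype α] [DecidableEq α] [CommRing R] (G : SimpleGraph α)
    (w : Sym2 α → R) (B S₁ S₂ : Finset α) :
    ∑ Y ∈ B.powerset, pmSum G w (Finset.univ \ (S₁ ∪ Y)) *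
          pmSum G w (Finset.univ \ (S₂ ∪ (B \ Y))) =
    ∑ p ∈ triples G B S₁ S₂, (∏ e ∈ p.2.1, w e) * (∏ e ∈ p.2.2, w e) := by
  classical
  unfold pmSum
  simp only [Finset.sum_mul_sum, ← Finset.sum_product']
  rw [Finset.sum_sigma']
  refine Finset.sum_bij' (fun x _ => (x.1, x.2.1, x.2.2)) (fun p _ => ⟨p.1, p.2.1, p.2.2⟩)
    ?_ ?_ ?_ ?_ ?_
  · rintro ⟨Y, m₁, m₂⟩ h
    simpa [mem_triples] using h
  · rintro ⟨Y, m₁, m₂⟩ h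
    simpa [mem_triples] using h
  · intros; rfl
  · intros; rfl
  · intros; rfl

theorem flip_mem [Fintype α] [DecidableEq α] {G : SimpleGraph α} {k : ℕ} {a b : Fin k → α}
    (hdist : ((List.finRange k).flatMap (fun i => [a i, b i])).Nodup)
    (hnc : NoncrossingList G ((List.finRange k).flatMap (fun i => [a i, b i])))
    (hAB : Disjoint (Finset.univ.image a) (Finset.univ.image b))
    {S S₁ S₂ T₁ T₂ : Finset α} (hS : S ⊆ Finset.univ.image a)
    (hS₁ : ∀ x, (x ∈ S₁ ∨ x ∈ S₂) ↔ x ∈ Finset.univ.image a)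
    (hS₂ : Disjoint S₁ S₂)
    (hT₁ : ∀ x, x ∈ T₁ ↔ (x ∈ S₁ ∧ x ∉ S) ∨ (x ∈ S₂ ∧ x ∈ S))
    (hT₂ : ∀ x, x ∈ T₂ ↔ (x ∈ S₂ ∧ x ∉ S) ∨ (x ∈ S₁ ∧ x ∈ S))
    (p : Finset α × Finset (Sym2 α) × Finset (Sym2 α))
    (hp : p ∈ triples G (Finset.univ.image b) S₁ S₂) :
    flip (Finset.univ.image b) S p ∈ triples G (Finset.univ.image b) T₁ T₂ := by
  obtain ⟨Y, m₁, m₂⟩ := p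
  obtain ⟨hY, h₁, h₂⟩ := mem_triples.1 hp
  simp only at hY h₁ h₂
  set A := Finset.univ.image a
  set B := Finset.univ.image b
  rw [Finset.disjoint_left] at hAB hS₂
  have hsep : ∀ x ∈ A, ∀ y ∈ A, (H m₁ m₂).Reachable x y → x = y := by
    intro x hx y hy hr
    refine sep_key hdist hnc h₁ h₂ ?_ ?_ hx hy hr
    · intro x
      have := hS₁ x
      have := @hY x
      have := @hAB x
      have := @hS₂ x
      simp only [Finset.mem_union, Finset.mem_sdiff, Finset.mem_univ, true_and]
      tauto
    · intro x
      have := hS₁ x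
      have := @hY x
      simp only [Finset.mem_union, Finset.mem_sdiff, Finset.mem_univ, true_and]
      tauto
  set C := comp S m₁ m₂ with hC
  have hCA : ∀ x ∈ A, x ∈ C ↔ x ∈ S := by
    intro x hx
    rw [hC, mem_comp]
    constructor
    · rintro ⟨t, ht, hr⟩
      rwa [← hsep t (hS ht) x hx hr]
    · intro h
      exact ⟨x, h, SimpleGraph.Reachable.refl _⟩
  have hcl := comp_closed S m₁ m₂
  rw [mem_triples]
  simp only [flip, ← hC]
  refine ⟨?_, ?_, ?_⟩
  · intro x
    have := @hY x
    simp only [Finset.mem_union, Finset.mem_sdiff, Finset.mem_inter]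
    tauto
  · convert pm_glue h₁ h₂ hcl using 1
    ext x
    have q1 := @hY x
    have q2 := hS₁ x
    have q3 := @hAB x
    have q4 := @hS₂ x
    have q5 := hT₁ x
    have q6 := hCA x
    rw [← hC]
    clear_value C A B
    clear hcl hsep hCA hT₁ hT₂ hS₁ hS₂ hAB h₁ h₂ hp hnc hdist hY hS
    simp only [Finset.mem_union, Finset.mem_sdiff, Finset.mem_univ, true_and, Finset.mem_inter]
    grind
  · convert pm_glue h₂ h₁ (fun e he => hcl e he.symm) using 1
    ext x
    have q1 := @hY x
    have q2 := hS₁ x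
    have q3 := @hAB x
    have q4 := @hS₂ x
    have q5 := hT₂ x
    have q6 := hCA x
    rw [← hC]
    clear_value C A B
    clear hcl hsep hCA hT₁ hT₂ hS₁ hS₂ hAB h₁ h₂ hp hnc hdist hY hS
    simp only [Finset.mem_union, Finset.mem_sdiff, Finset.mem_univ, true_and, Finset.mem_inter]
    grind

theorem pmSum_zero {R : Type*} [Fintype α] [DecidableEq α] [CommRing R] (G : SimpleGraph α)
    (w : Sym2 α → R) (s : Finset α) (h : ¬ Even s.card) : pmSum G w s = 0 := by
  classical
  unfold pmSum
  rw [Finset.filter_false_of_mem, Finset.sum_empty]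
  intro m _ hm
  exact h (pm_even hm)

end CondAux

/-- Generalized graphical condensation (Theorem 2.1). -/
theorem generalized_condensation_even {α R : Type*} [Fintype α] [DecidableEq α] [CommRing R]
    (G : SimpleGraph α) (w : Sym2 α → R) (n k : ℕ)
    (hcard : Fintype.card α = 2 * n) (hk2 : 2 ≤ k) (hkn : k ≤ n)
    (a b : Fin k → α)
    (hdist : ((List.finRange k).flatMap (fun i => [a i, b i])).Nodup)
    (hnc : NoncrossingList G ((List.finRange k).flatMap (fun i => [a i, b i])))
    (A B : Finset α) (hA : A = Finset.univ.image a) (hB : B = Finset.univ.image b)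
    (A₁ A₂ : Finset α) (hpart : A₁ ∪ A₂ = A) (hdisj : Disjoint A₁ A₂) :
    ∑ W ∈ B.powerset.filter (fun W => Even W.card),
        pmSum G w (Finset.univ \ W) * pmSum G w (Finset.univ \ (A ∪ (B \ W))) =
    ∑ Y ∈ B.powerset.filter (fun Y => Y.card % 2 = A₁.card % 2),
        pmSum G w (Finset.univ \ (A₁ ∪ Y)) *
          pmSum G w (Finset.univ \ (A₂ ∪ (B \ Y))) := by
  have hABd : Disjoint (Finset.univ.image a) (Finset.univ.image b) := by
    rw [Finset.disjoint_left]
    intro x hx hy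
    simp only [Finset.mem_image, Finset.mem_univ, true_and] at hx hy
    obtain ⟨i, rfl⟩ := hx
    obtain ⟨j, hj⟩ := hy
    rw [List.nodup_flatMap] at hdist
    by_cases hij : i = j
    · subst hij
      have := hdist.1 i (by simp)
      simp [hj] at this
    · haveI : Std.Symm (fun i j : Fin k => i ≠ j → List.Disjoint [a i, b i] [a j, b j]) :=
        ⟨fun x y h hn => (h hn.symm).symm⟩
      have h1 : List.Pairwise (fun i j : Fin k =>
          i ≠ j → List.Disjoint [a i, b i] [a j, b j]) (List.finRange k) := by
        refine hdist.2.imp ?_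
        intro i j h _
        exact h
      have h2 := (List.Pairwise.forall_of_forall (R := fun i j : Fin k =>
        i ≠ j → List.Disjoint [a i, b i] [a j, b j]) (l := List.finRange k)
        (fun x _ h => absurd rfl h)
        h1) (List.mem_finRange i) (List.mem_finRange j) hij
      simp [List.disjoint_left, hj] at h2
  have hpar : ∀ S Y : Finset α, Disjoint S Y →
      (Even (Finset.univ \ (S ∪ Y)).card ↔ Y.card % 2 = S.card % 2) := by
    intro S Y hd
    have h1 := Finset.card_sdiff_add_card_eq_card (Finset.subset_univ (S ∪ Y))
    rw [Finset.card_univ, hcard, Finset.card_union_of_disjoint hd] at h1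
    rw [Nat.even_iff]
    lia
  subst hA hB
  have hA₁ : A₁ ⊆ Finset.univ.image a := hpart ▸ Finset.subset_union_left
  rw [Finset.sum_filter_of_ne, Finset.sum_filter_of_ne]
  · have e := CondAux.sum_eq G w (Finset.univ.image b) ∅ (Finset.univ.image a)
    simp only [Finset.empty_union] at e
    rw [e, CondAux.sum_eq]
    have hmem : ∀ x, x ∈ A₁ ∨ x ∈ A₂ ↔ x ∈ Finset.univ.image a := by
      intro x
      rw [← hpart, Finset.mem_union]
    have hd := Finset.disjoint_left.1 hdisj
    refine Finset.sum_bij' (fun p _ => CondAux.flip (Finset.univ.image b) A₁ p)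
      (fun p _ => CondAux.flip (Finset.univ.image b) A₁ p) ?_ ?_ ?_ ?_ ?_
    · refine CondAux.flip_mem hdist hnc hABd hA₁ (by simp) (by simp) ?_ ?_
      · intro x
        have := @hA₁ x
        simp only [Finset.notMem_empty, false_and, false_or]
        tauto
      · intro x
        have := hmem x
        have := @hd x
        simp only [Finset.notMem_empty, false_and, or_false]
        tauto
    · refine CondAux.flip_mem hdist hnc hABd hA₁ hmem hdisj ?_ ?_
      · intro x
        have := @hd x
        simp only [Finset.notMem_empty, false_iff]
        tauto
      · intro x
        have := hmem x
        have := @hd x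
        tauto
    · intro p hp
      exact CondAux.flip_flip _ _ p (CondAux.mem_triples.1 hp).1
    · intro p hp
      exact CondAux.flip_flip _ _ p (CondAux.mem_triples.1 hp).1
    · intro p hp
      exact (CondAux.prod_glue w _ _ _).symm
  · intro Y hY hne
    by_contra hcon
    rw [← hpar A₁ Y (Finset.disjoint_of_subset_left hA₁
      (Finset.disjoint_of_subset_right (Finset.mem_powerset.1 hY) hABd))] at hcon
    rw [CondAux.pmSum_zero G w _ hcon, zero_mul] at hne
    exact hne rfl
  · intro Y hY hne
    by_contra hcon
    have := hpar ∅ Y (by simp)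
    rw [Finset.empty_union, Finset.card_empty, Nat.zero_mod, ← Nat.even_iff] at this
    rw [← this] at hcon
    rw [CondAux.pmSum_zero G w _ hcon, zero_mul] at hne
    exact hne rfl
end

section
/- Let G be a finite simple bipartite graph with bipartition classes U and V each of size n, with edge weights in a commutative ring, let 2 ≤ k ≤ n, and let a_1, b_1, …, a_k, b_k be distinct vertices with A = {a_1,…,a_k} ⊆ U and B = {b_1,…,b_k} ⊆ V such that G is noncrossing with respect to the cyclic sequence (a_1, b_1, a_2, b_2, …, a_k, b_k). Then for every partition of A into two disjoint subsets A_1, A_2: M(G)·M(G−A−B) = Σ_{Y⊆B, |Y| = |A_1|} M(G−A_1−Y)·M(G−A_2−(B∖Y)). -/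
namespace BCond

lemma three {α : Type*} [Fintype α] (H : SimpleGraph α)
    (hd : ∀ v, ∃ F : Finset α, F.card ≤ 2 ∧ ∀ u, H.Adj v u → u ∈ F)
    (x y z : α) (hxy : x ≠ y) (hxz : x ≠ z) (hyz : y ≠ z)
    (h1 : ∀ v, v = x ∨ v = y ∨ v = z → ∃ F : Finset α, F.card ≤ 1 ∧ ∀ u, H.Adj v u → u ∈ F)
    (hry : H.Reachable x y) (hrz : H.Reachable x z) : False := by
  classical
  set K := H.connectedComponentMk x with hK
  have hx : x ∈ K.supp := rfl
  have hy : y ∈ K.supp := SimpleGraph.ConnectedComponent.sound hry.symm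
  have hz : z ∈ K.supp := SimpleGraph.ConnectedComponent.sound hrz.symm
  have hconn := (K.connected_toSimpleGraph).card_vert_le_card_edgeSet_add_one
  have hsum := K.toSimpleGraph.sum_degrees_eq_twice_card_edges
  have hdeg : ∀ (v : K) (F : Finset α), (∀ u, H.Adj v u → u ∈ F) →
      K.toSimpleGraph.degree v ≤ F.card := by
    intro v F hF
    rw [← SimpleGraph.card_neighborFinset_eq_degree]
    apply Finset.card_le_card_of_injOn (fun u : K => (u : α))
    · intro u hu
      apply hF
      have := (SimpleGraph.mem_neighborFinset _ _ _).1 hu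
      exact this
    · intro u _ w _ h
      exact Subtype.ext h
  let X : K := ⟨x, hx⟩
  let Y : K := ⟨y, hy⟩
  let Z : K := ⟨z, hz⟩
  have hle : ∑ v : K, (K.toSimpleGraph.degree v + if v ∈ ({X, Y, Z} : Finset K) then 1 else 0) ≤ ∑ v : K, 2 := by
    apply Finset.sum_le_sum
    intro v _
    split_ifs with h
    · obtain ⟨F, hF, hF'⟩ := h1 v (by
        simp only [Finset.mem_insert, Finset.mem_singleton] at h
        rcases h with rfl | rfl | rfl <;> simp [X, Y, Z])
      have := hdeg v F hF'
      omega
    · obtain ⟨F, hF, hF'⟩ := hd v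
      have := hdeg v F hF'
      omega
  rw [Finset.sum_add_distrib, hsum] at hle
  simp only [Finset.sum_ite_mem, Finset.univ_inter, Finset.sum_const, smul_eq_mul, mul_one,
    Finset.card_univ] at hle
  have hc : ({X, Y, Z} : Finset K).card = 3 := by
    apply Finset.card_eq_three.2
    exact ⟨X, Y, Z, by simpa [X, Y] using hxy, by simpa [X, Z] using hxz,
      by simpa [Y, Z] using hyz, rfl⟩
  rw [hc] at hle
  rw [Nat.card_eq_fintype_card, Nat.card_eq_fintype_card, ← SimpleGraph.edgeFinset_card] at hconn
  omega

/-- the superposition graph -/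
def HG {α : Type*} (M N : Finset (Sym2 α)) : SimpleGraph α :=
  SimpleGraph.fromEdgeSet {e | e ∈ M ∨ e ∈ N}

lemma HG_adj {α : Type*} {M N : Finset (Sym2 α)} {u v : α} :
    (HG M N).Adj u v ↔ (s(u, v) ∈ M ∨ s(u, v) ∈ N) ∧ u ≠ v := by
  simp [HG]

section
variable {α : Type*} {G : SimpleGraph α} {s : Finset α} {M : Finset (Sym2 α)}

lemma pm_adj (h : IsPMOn G s M) {u v : α} (he : s(u, v) ∈ M) : G.Adj u v := (h.1 _ he).1

lemma pm_mem (h : IsPMOn G s M) {u v : α} (he : s(u, v) ∈ M) : u ∈ s ∧ v ∈ s :=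
  ⟨(h.1 _ he).2 u (Sym2.mem_mk_left _ _), (h.1 _ he).2 v (Sym2.mem_mk_right _ _)⟩

lemma pm_uniq (h : IsPMOn G s M) {u v v' : α} (he : s(u, v) ∈ M) (he' : s(u, v') ∈ M) :
    v = v' := by
  have := (h.2 u (pm_mem h he).1).unique ⟨he, Sym2.mem_mk_left _ _⟩ ⟨he', Sym2.mem_mk_left _ _⟩
  exact Sym2.congr_right.1 this

lemma pm_ex (h : IsPMOn G s M) {u : α} (hu : u ∈ s) : ∃ v, s(u, v) ∈ M := by
  obtain ⟨e, ⟨he, hue⟩, -⟩ := h.2 u hu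
  obtain ⟨v, rfl⟩ := hue
  exact ⟨v, he⟩

lemma pm_nbr (h : IsPMOn G s M) (u : α) : ∃ F : Finset α, F.card ≤ 1 ∧
    (u ∉ s → F = ∅) ∧ ∀ v, s(u, v) ∈ M → v ∈ F := by
  by_cases hu : u ∈ s
  · obtain ⟨v, hv⟩ := pm_ex h hu
    exact ⟨{v}, by simp, fun h => absurd hu h, fun v' hv' => by simp [pm_uniq h hv' hv]⟩
  · exact ⟨∅, by simp, fun _ => rfl, fun v hv => absurd (pm_mem h hv).1 hu⟩

lemma pm_card [Fintype α] [DecidableEq α] {U V : Finset α} (hb : IsBipartition G U V)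
    (h : IsPMOn G s M) (T : Finset α) (hT : ∀ u v, s(u, v) ∈ M → u ∈ T → v ∈ T) :
    (T ∩ s ∩ U).card = (T ∩ s ∩ V).card := by
  have aux : ∀ U V : Finset α, IsBipartition G U V → (T ∩ s ∩ U).card ≤ (T ∩ s ∩ V).card := by
    intro U V hb
    choose! f hf using fun u (hu : u ∈ s) => pm_ex h hu
    apply Finset.card_le_card_of_injOn f
    · intro u hu
      simp only [Finset.coe_inter, Set.mem_inter_iff, Finset.mem_coe] at hu ⊢
      have := hf u hu.1.2
      refine ⟨⟨hT _ _ this hu.1.1, (pm_mem h this).2⟩, ?_⟩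
      rcases hb.2.2 (pm_adj h this) with h1 | h1
      · exact h1.2
      · exact absurd h1.1 (Finset.disjoint_left.1 hb.1 hu.2)
    · intro u hu v hv huv
      simp only [Finset.coe_inter, Set.mem_inter_iff, Finset.mem_coe] at hu hv
      have h1 := hf u hu.1.2
      have h2 := hf v hv.1.2
      rw [huv, Sym2.eq_swap] at h1
      rw [Sym2.eq_swap] at h2
      exact pm_uniq h h1 h2
  refine le_antisymm (aux U V hb) (aux V U ⟨hb.1.symm, by rw [Finset.union_comm]; exact hb.2.1, ?_⟩)
  intro x y hxy
  exact (hb.2.2 hxy).symm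

end

section
variable {α : Type*} [Fintype α] [DecidableEq α] {G : SimpleGraph α} {S1 S2 U V : Finset α}
  {M N : Finset (Sym2 α)}

lemma count (hb : IsBipartition G U V)
    (hM : IsPMOn G (Finset.univ \ S1) M) (hN : IsPMOn G (Finset.univ \ S2) N)
    (T : Finset α) (hT : ∀ u v, (HG M N).Adj u v → u ∈ T → v ∈ T) :
    (T ∩ S1 ∩ U).card + (T ∩ S2 ∩ V).card = (T ∩ S2 ∩ U).card + (T ∩ S1 ∩ V).card := by
  have h1 := pm_card hb hM T (fun u v he =>
    hT u v (HG_adj.2 ⟨Or.inl he, (pm_adj hM he).ne⟩))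
  have h2 := pm_card hb hN T (fun u v he =>
    hT u v (HG_adj.2 ⟨Or.inr he, (pm_adj hN he).ne⟩))
  have key : ∀ S W : Finset α, (T ∩ S ∩ W).card + (T ∩ (Finset.univ \ S) ∩ W).card
      = (T ∩ W).card := by
    intro S W
    rw [← Finset.card_union_of_disjoint]
    · congr 1
      ext x
      simp only [Finset.mem_union, Finset.mem_inter, Finset.mem_sdiff, Finset.mem_univ, true_and]
      tauto
    · rw [Finset.disjoint_left]
      intro x
      simp only [Finset.mem_inter, Finset.mem_sdiff, Finset.mem_univ, true_and]
      tauto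
  have := key S1 U
  have := key S1 V
  have := key S2 U
  have := key S2 V
  omega

lemma even_card (hb : IsBipartition G U V)
    (hM : IsPMOn G (Finset.univ \ S1) M) (hN : IsPMOn G (Finset.univ \ S2) N)
    (hS : Disjoint S1 S2)
    (T : Finset α) (hT : ∀ u v, (HG M N).Adj u v → u ∈ T → v ∈ T) :
    (T ∩ (S1 ∪ S2)).card % 2 = 0 := by
  have h := count hb hM hN T hT
  have key : ∀ S : Finset α, (T ∩ S ∩ U).card + (T ∩ S ∩ V).card = (T ∩ S).card := by
    intro S
    rw [← Finset.card_union_of_disjoint, ← Finset.inter_union_distrib_left, hb.2.1,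
      Finset.inter_univ]
    exact hb.1.mono Finset.inter_subset_right Finset.inter_subset_right
  rw [Finset.inter_union_distrib_left, Finset.card_union_of_disjoint
    (hS.mono Finset.inter_subset_right Finset.inter_subset_right), ← key, ← key]
  omega

lemma HG_le {s t : Finset α} (hM : IsPMOn G s M) (hN : IsPMOn G t N) : HG M N ≤ G := by
  intro u v h
  rcases (HG_adj.1 h).1 with h | h
  · exact pm_adj hM h
  · exact pm_adj hN h

lemma three' (hM : IsPMOn G (Finset.univ \ S1) M) (hN : IsPMOn G (Finset.univ \ S2) N)
    (x y z : α) (hx : x ∈ S1 ∪ S2) (hy : y ∈ S1 ∪ S2) (hz : z ∈ S1 ∪ S2)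
    (hxy : x ≠ y) (hxz : x ≠ z) (hyz : y ≠ z)
    (hry : (HG M N).Reachable x y) (hrz : (HG M N).Reachable x z) : False := by
  refine three (HG M N) ?_ x y z hxy hxz hyz ?_ hry hrz
  · intro v
    obtain ⟨F, h1, h2, h3⟩ := pm_nbr hM v
    obtain ⟨F', h1', h2', h3'⟩ := pm_nbr hN v
    refine ⟨F ∪ F', (Finset.card_union_le _ _).trans (by omega), fun u hu => ?_⟩
    rw [Finset.mem_union]
    exact (HG_adj.1 hu).1.imp (h3 u) (h3' u)
  · intro v hv
    have hv' : v ∈ S1 ∪ S2 := by rcases hv with rfl | rfl | rfl <;> assumption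
    obtain ⟨F, h1, h2, h3⟩ := pm_nbr hM v
    obtain ⟨F', h1', h2', h3'⟩ := pm_nbr hN v
    refine ⟨F ∪ F', ?_, fun u hu => ?_⟩
    · rcases Finset.mem_union.1 hv' with h | h
      · rw [h2 (by simp [h])]; simpa using h1'
      · rw [h2' (by simp [h])]; simpa using h1
    rw [Finset.mem_union]
    exact (HG_adj.1 hu).1.imp (h3 u) (h3' u)

lemma nocross (hM : IsPMOn G (Finset.univ \ S1) M) (hN : IsPMOn G (Finset.univ \ S2) N)
    (S : Set α) (hS : ∀ x, x ∈ S ↔ x ∈ S1 ∪ S2) (x y x' y' : α)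
    (hx : x ∈ S) (hy : y ∈ S) (hx' : x' ∈ S) (hy' : y' ∈ S)
    (hxy : x ≠ y) (hxy' : x' ≠ y')
    (hr : (HG M N).Reachable x y) (hr' : (HG M N).Reachable x' y')
    (hn : ¬ (HG M N).Reachable x x') : DisjointPaths G S x y x' y' := by
  classical
  obtain ⟨p, hp⟩ := hr.exists_isPath
  obtain ⟨q, hq⟩ := hr'.exists_isPath
  have hle := HG_le hM hN
  refine ⟨p.mapLe hle, q.mapLe hle, hp.mapLe hle, hq.mapLe hle, ?_, ?_, ?_⟩
  · intro u hu hu'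
    simp only [SimpleGraph.Walk.support_mapLe_eq_support] at hu hu'
    exact hn ((p.takeUntil _ hu).reachable.trans (q.takeUntil _ hu').reachable.symm)
  · intro u hu h1 h2 h3
    simp only [SimpleGraph.Walk.support_mapLe_eq_support] at hu
    exact three' hM hN x y u ((hS _).1 hx) ((hS _).1 hy) ((hS _).1 h3) hxy h1.symm h2.symm hr
      (p.takeUntil _ hu).reachable
  · intro u hu h1 h2 h3
    simp only [SimpleGraph.Walk.support_mapLe_eq_support] at hu
    exact three' hM hN x' y' u ((hS _).1 hx') ((hS _).1 hy') ((hS _).1 h3) hxy' h1.symm h2.symm hr'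
      (q.takeUntil _ hu).reachable

lemma not_reach (hb : IsBipartition G U V)
    (hM : IsPMOn G (Finset.univ \ S1) M) (hN : IsPMOn G (Finset.univ \ S2) N)
    (hd : Disjoint S1 S2) (L : List α) (hL : L.Nodup) (hS : ∀ x, x ∈ L ↔ x ∈ S1 ∪ S2)
    (hnc : NoncrossingList G L) (p q : Fin L.length) (hpq : p < q)
    (heven : ((q : ℕ) - p) % 2 = 0) :
    ¬ (HG M N).Reachable (L.get p) (L.get q) := by
  classical
  intro hr
  have hinj : Function.Injective L.get := List.nodup_iff_injective_get.1 hL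
  have hmem : ∀ i, L.get i ∈ S1 ∪ S2 := fun i => (hS _).1 (List.get_mem _ _)
  have hmemL : ∀ i, L.get i ∈ {x | x ∈ L} := fun i => (List.get_mem _ _)
  let T : Finset α := Finset.univ.filter
    (fun v => ∃ r, p < r ∧ r < q ∧ (HG M N).Reachable (L.get r) v)
  have hT : ∀ u v, (HG M N).Adj u v → u ∈ T → v ∈ T := by
    intro u v huv hu
    simp only [T, Finset.mem_filter, Finset.mem_univ, true_and] at hu ⊢
    obtain ⟨r, h1, h2, h3⟩ := hu
    exact ⟨r, h1, h2, h3.trans huv.reachable⟩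
  have hE := even_card hb hM hN hd T hT
  have hTS : T ∩ (S1 ∪ S2) = (Finset.Ioo p q).image L.get := by
    ext v
    simp only [T, Finset.mem_inter, Finset.mem_filter, Finset.mem_univ, true_and,
      Finset.mem_image, Finset.mem_Ioo]
    constructor
    · rintro ⟨⟨r, h1, h2, h3⟩, hv⟩
      obtain ⟨t, rfl⟩ := List.mem_iff_get.1 ((hS v).2 hv)
      refine ⟨t, ?_, rfl⟩
      have hrp : L.get r ≠ L.get p := fun h => h1.ne (hinj h).symm
      have hrq : L.get r ≠ L.get q := fun h => h2.ne (hinj h)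
      have hpq' : L.get p ≠ L.get q := fun h => hpq.ne (hinj h)
      have hnr : ¬ (HG M N).Reachable (L.get p) (L.get r) := fun h =>
        three' hM hN (L.get p) (L.get q) (L.get r) (hmem _) (hmem _) (hmem _)
          hpq' hrp.symm hrq.symm hr h
      by_contra hcon
      have htp : t ≠ p := by rintro rfl; exact hnr h3.symm
      have htq : t ≠ q := by rintro rfl; exact hnr (hr.trans h3.symm)
      have hrt : L.get r ≠ L.get t := fun h => by
        have := hinj h; subst this; exact hcon ⟨h1, h2⟩
      rcases lt_or_gt_of_ne htp with h | h
      · exact hnc t p r q h h1 h2 (nocross hM hN _ hS _ _ _ _ (hmemL _) (hmemL _) (hmemL _)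
          (hmemL _) hrt.symm hpq' h3.symm hr (fun h' => hnr (h'.symm.trans h3.symm)))
      · have h' : q < t := by
          rcases lt_or_gt_of_ne htq with h' | h'
          · exact absurd ⟨h, h'⟩ hcon
          · exact h'
        exact hnc p r q t h1 h2 h' (nocross hM hN _ hS _ _ _ _ (hmemL _) (hmemL _) (hmemL _)
          (hmemL _) hpq' hrt hr h3 hnr)
    · rintro ⟨r, ⟨h1, h2⟩, rfl⟩
      exact ⟨⟨r, h1, h2, SimpleGraph.Reachable.refl _⟩, hmem r⟩
  rw [hTS, Finset.card_image_of_injective _ hinj, Fin.card_Ioo] at hE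
  have : (p : ℕ) < q := hpq
  omega

end

lemma flat_get {α ι : Type*} (a b : ι → α) (l : List ι) (m : ℕ) :
    (l.flatMap (fun i => [a i, b i]))[2 * m]? = l[m]?.map a := by
  induction l generalizing m with
  | nil => simp
  | cons x l ih =>
    cases m with
    | zero => simp
    | succ m => simpa [Nat.mul_succ] using ih m

lemma flat_idx {α : Type*} {k : ℕ} (a b : Fin k → α) (i : Fin k) :
    ∃ h : 2 * (i : ℕ) < ((List.finRange k).flatMap (fun i => [a i, b i])).length,
      ((List.finRange k).flatMap (fun i => [a i, b i])).get ⟨2 * i, h⟩ = a i := by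
  have := flat_get a b (List.finRange k) i
  rw [List.getElem?_eq_getElem (l := List.finRange k) (by simp)] at this
  simp only [List.getElem_finRange, Option.map_some] at this
  obtain ⟨h, h'⟩ := List.getElem?_eq_some_iff.1 this
  exact ⟨h, by simpa using h'⟩

section
variable {α : Type*} [Fintype α] [DecidableEq α] {G : SimpleGraph α}

open Classical in
/-- union of the components meeting `X` -/
noncomputable def comp (X : Finset α) (M N : Finset (Sym2 α)) : Finset α :=
  Finset.univ.filter (fun v => ∃ x ∈ X, (HG M N).Reachable x v)

lemma mem_comp {X : Finset α} {M N : Finset (Sym2 α)} {v : α} :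
    v ∈ comp X M N ↔ ∃ x ∈ X, (HG M N).Reachable x v := by
  simp [comp]

lemma comp_closed (X : Finset α) (M N : Finset (Sym2 α)) :
    ∀ u v, (HG M N).Adj u v → u ∈ comp X M N → v ∈ comp X M N := by
  intro u v huv hu
  rw [mem_comp] at hu ⊢
  obtain ⟨x, h1, h3⟩ := hu
  exact ⟨x, h1, h3.trans huv.reachable⟩

open Classical in
/-- replace `M` by `N` inside `C` -/
noncomputable def sw (C : Finset α) (M N : Finset (Sym2 α)) : Finset (Sym2 α) :=
  M.filter (fun e => ¬ ∃ v ∈ e, v ∈ C) ∪ N.filter (fun e => ∃ v ∈ e, v ∈ C)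

lemma mem_sw {C : Finset α} {M N : Finset (Sym2 α)} {e : Sym2 α} :
    e ∈ sw C M N ↔ (e ∈ M ∧ ¬ ∃ v ∈ e, v ∈ C) ∨ (e ∈ N ∧ ∃ v ∈ e, v ∈ C) := by
  simp [sw]

lemma sw_sw (C : Finset α) (M N : Finset (Sym2 α)) : sw C (sw C M N) (sw C N M) = M := by
  ext e
  simp only [mem_sw]
  by_cases h : ∃ v ∈ e, v ∈ C
  · simp only [h]; tauto
  · simp only [h]; tauto

lemma HG_sw (C : Finset α) (M N : Finset (Sym2 α)) : HG (sw C M N) (sw C N M) = HG M N := by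
  ext u v
  simp only [HG_adj, mem_sw]
  tauto

lemma comp_sw (X C : Finset α) (M N : Finset (Sym2 α)) :
    comp X (sw C M N) (sw C N M) = comp X M N := by
  ext v
  simp only [mem_comp, HG_sw]

lemma sw_prod {R : Type*} [CommRing R] (w : Sym2 α → R) (C : Finset α) (M N : Finset (Sym2 α)) :
    (∏ e ∈ sw C M N, w e) * (∏ e ∈ sw C N M, w e) = (∏ e ∈ M, w e) * ∏ e ∈ N, w e := by
  classical
  have key : ∀ M N : Finset (Sym2 α), ∏ e ∈ sw C M N, w e =
      (∏ e ∈ M.filter (fun e => ¬ ∃ v ∈ e, v ∈ C), w e) *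
        ∏ e ∈ N.filter (fun e => ∃ v ∈ e, v ∈ C), w e := by
    intro M N
    unfold sw
    rw [Finset.prod_union]
    · rw [Finset.disjoint_left]
      intro e
      simp only [Finset.mem_filter]
      exact fun h h' => h.2 h'.2
  rw [key, key, ← Finset.prod_filter_mul_prod_filter_not M (fun e => ∃ v ∈ e, v ∈ C),
    ← Finset.prod_filter_mul_prod_filter_not N (fun e => ∃ v ∈ e, v ∈ C)]
  ring

lemma sw_pm {s t : Finset α} {M N : Finset (Sym2 α)} (hM : IsPMOn G s M) (hN : IsPMOn G t N)
    (C : Finset α) (hC : ∀ u v, (HG M N).Adj u v → u ∈ C → v ∈ C) (r : Finset α)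
    (hr : ∀ v, v ∈ r ↔ (v ∈ s ∧ v ∉ C) ∨ (v ∈ t ∧ v ∈ C)) : IsPMOn G r (sw C M N) := by
  have hall : ∀ e, e ∈ M ∨ e ∈ N → (∃ v ∈ e, v ∈ C) → ∀ v ∈ e, v ∈ C := by
    intro e he ⟨v, hv, hvC⟩ u hu
    by_cases huv : v = u
    · exact huv ▸ hvC
    · have : e = s(v, u) := (Sym2.mem_and_mem_iff huv).1 ⟨hv, hu⟩
      subst this
      exact hC v u (HG_adj.2 ⟨he, huv⟩) hvC
  constructor
  · intro e he
    rcases mem_sw.1 he with ⟨h1, h2⟩ | ⟨h1, h2⟩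
    · refine ⟨(hM.1 e h1).1, fun v hv => (hr v).2 (Or.inl ⟨(hM.1 e h1).2 v hv, fun h => h2 ⟨v, hv, h⟩⟩)⟩
    · refine ⟨(hN.1 e h1).1, fun v hv => (hr v).2 (Or.inr ⟨(hN.1 e h1).2 v hv, hall e (Or.inr h1) h2 v hv⟩)⟩
  · intro v hv
    rcases (hr v).1 hv with ⟨h1, h2⟩ | ⟨h1, h2⟩
    · obtain ⟨e, ⟨he, hve⟩, hu⟩ := hM.2 v h1
      refine ⟨e, ⟨mem_sw.2 (Or.inl ⟨he, fun h => h2 (hall e (Or.inl he) h v hve)⟩), hve⟩, ?_⟩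
      rintro f ⟨hf, hvf⟩
      rcases mem_sw.1 hf with h | h
      · exact hu f ⟨h.1, hvf⟩
      · exact absurd (hall f (Or.inr h.1) h.2 v hvf) h2
    · obtain ⟨e, ⟨he, hve⟩, hu⟩ := hN.2 v h1
      refine ⟨e, ⟨mem_sw.2 (Or.inr ⟨he, ⟨v, hve, h2⟩⟩), hve⟩, ?_⟩
      rintro f ⟨hf, hvf⟩
      rcases mem_sw.1 hf with h | h
      · exact absurd ⟨v, hvf, h2⟩ h.2
      · exact hu f ⟨h.1, hvf⟩

end

end BCond

open BCond in
set_option maxHeartbeats 2000000 in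
/-- Bipartite corollary of the generalized condensation (Corollary 2.4). -/
theorem bipartite_condensation {α R : Type*} [Fintype α] [DecidableEq α] [CommRing R]
    (G : SimpleGraph α) (w : Sym2 α → R) (n k : ℕ)
    (U V : Finset α) (hbip : IsBipartition G U V)
    (hU : U.card = n) (hV : V.card = n)
    (hk2 : 2 ≤ k) (hkn : k ≤ n)
    (a b : Fin k → α)
    (hdist : ((List.finRange k).flatMap (fun i => [a i, b i])).Nodup)
    (hnc : NoncrossingList G ((List.finRange k).flatMap (fun i => [a i, b i])))
    (A B : Finset α) (hA : A = Finset.univ.image a) (hB : B = Finset.univ.image b)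
    (hAU : A ⊆ U) (hBV : B ⊆ V)
    (A₁ A₂ : Finset α) (hpart : A₁ ∪ A₂ = A) (hdisj : Disjoint A₁ A₂) :
    pmSum G w Finset.univ * pmSum G w (Finset.univ \ (A ∪ B)) =
    ∑ Y ∈ B.powerset.filter (fun Y => Y.card = A₁.card),
        pmSum G w (Finset.univ \ (A₁ ∪ Y)) *
          pmSum G w (Finset.univ \ (A₂ ∪ (B \ Y))) := by
  classical
  have hmemL : ∀ x, x ∈ (List.finRange k).flatMap (fun i => [a i, b i]) ↔ x ∈ A ∪ B := by
    intro x
    subst hA hB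
    simp only [List.mem_flatMap, List.mem_finRange, true_and, List.mem_cons, List.not_mem_nil,
      or_false, Finset.mem_union, Finset.mem_image, Finset.mem_univ, exists_or]
    simp only [eq_comm]
  have hUV := Finset.disjoint_left.1 hbip.1
  have hAB : ∀ x, x ∈ A → x ∉ B := fun x h h' => hUV (hAU h) (hBV h')
  have hA1 : ∀ x ∈ A₁, x ∈ A := fun x h => hpart ▸ Finset.mem_union_left _ h
  have hA2 : ∀ x ∈ A₂, x ∈ A := fun x h => hpart ▸ Finset.mem_union_right _ h
  have hA12 : ∀ x, x ∈ A → x ∈ A₁ ∨ x ∈ A₂ := fun x h => Finset.mem_union.1 (hpart ▸ h)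
  have hdj := Finset.disjoint_left.1 hdisj
  have hAV : ∀ x, x ∈ A → x ∉ V := fun x h => hUV (hAU h)
  have hBU : ∀ x, x ∈ B → x ∉ U := fun x h h' => hUV h' (hBV h)
  -- distinct `a`'s are not connected
  have hkey : ∀ (S1 S2 : Finset α) (M N : Finset (Sym2 α)),
      IsPMOn G (Finset.univ \ S1) M → IsPMOn G (Finset.univ \ S2) N → Disjoint S1 S2 →
      S1 ∪ S2 = A ∪ B → ∀ x ∈ A, (x ∈ comp A₁ M N ↔ x ∈ A₁) := by
    intro S1 S2 M N hM hN hd hS x hx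
    have hnr : ∀ i j : Fin k, i < j → ¬ (HG M N).Reachable (a i) (a j) := by
      intro i j hij
      obtain ⟨h1, h1'⟩ := flat_idx a b i
      obtain ⟨h2, h2'⟩ := flat_idx a b j
      rw [← h1', ← h2']
      have hij' : (i : ℕ) < j := hij
      apply not_reach hbip hM hN hd _ hdist (by rw [hS]; exact hmemL) hnc
      · show 2 * (i : ℕ) < 2 * j
        omega
      · show (2 * (j : ℕ) - 2 * i) % 2 = 0
        omega
    constructor
    · intro h
      obtain ⟨y, hy, hr⟩ := mem_comp.1 h
      have hyA := hA1 y hy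
      rw [hA] at hx hyA
      obtain ⟨i, -, rfl⟩ := Finset.mem_image.1 hx
      obtain ⟨j, -, rfl⟩ := Finset.mem_image.1 hyA
      rcases lt_trichotomy i j with h | h | h
      · exact absurd hr.symm (hnr i j h)
      · rw [h]; exact hy
      · exact absurd hr (hnr j i h)
    · intro h
      exact mem_comp.2 ⟨x, h, SimpleGraph.Reachable.refl _⟩
  -- left hand side
  have hleft : ∀ M N : Finset (Sym2 α), IsPMOn G Finset.univ M →
      IsPMOn G (Finset.univ \ (A ∪ B)) N →
      (comp A₁ M N ∩ B).card = A₁.card ∧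
      IsPMOn G (Finset.univ \ (A₁ ∪ (comp A₁ M N ∩ B))) (sw (comp A₁ M N) M N) ∧
      IsPMOn G (Finset.univ \ (A₂ ∪ (B \ (comp A₁ M N ∩ B)))) (sw (comp A₁ M N) N M) := by
    intro M N hM hN
    have hM' : IsPMOn G (Finset.univ \ ∅) M := by simpa using hM
    have hk := hkey ∅ (A ∪ B) M N hM' hN (Finset.disjoint_empty_left _) (by simp)
    have hcl := comp_closed A₁ M N
    have hc := count hbip hM' hN _ hcl
    refine ⟨?_, ?_, ?_⟩
    · have e1 : comp A₁ M N ∩ (A ∪ B) ∩ V = comp A₁ M N ∩ B := by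
        ext x
        simp only [Finset.mem_inter, Finset.mem_union]
        have := hAV x
        have := @hBV x
        grind only
      have e2 : comp A₁ M N ∩ (A ∪ B) ∩ U = A₁ := by
        ext x
        simp only [Finset.mem_inter, Finset.mem_union]
        have := hBU x
        have := @hAU x
        have := hk x
        have := hA1 x
        grind only
      rw [e1, e2] at hc
      simpa using hc
    · apply sw_pm hM hN _ hcl
      intro x
      simp only [Finset.mem_inter, Finset.mem_union, Finset.mem_sdiff, Finset.mem_univ, true_and]
      have := hk x
      have := hA1 x
      have := hAB x
      grind only
    · apply sw_pm hN hM _ (by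
        intro u v h
        exact hcl u v (HG_adj.2 ⟨(HG_adj.1 h).1.symm, (HG_adj.1 h).2⟩))
      intro x
      simp only [Finset.mem_inter, Finset.mem_union, Finset.mem_sdiff, Finset.mem_univ, true_and]
      have := hk x
      have := hA2 x
      have := hA12 x
      have := hAB x
      have := @hdj x
      grind only
  -- right hand side
  have hright : ∀ (Y : Finset α) (M N : Finset (Sym2 α)), Y ⊆ B → Y.card = A₁.card →
      IsPMOn G (Finset.univ \ (A₁ ∪ Y)) M → IsPMOn G (Finset.univ \ (A₂ ∪ (B \ Y))) N →
      comp A₁ M N ∩ B = Y ∧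
      IsPMOn G Finset.univ (sw (comp A₁ M N) M N) ∧
      IsPMOn G (Finset.univ \ (A ∪ B)) (sw (comp A₁ M N) N M) := by
    intro Y M N hYB hY hM hN
    have hk := hkey (A₁ ∪ Y) (A₂ ∪ (B \ Y)) M N hM hN (by
        rw [Finset.disjoint_left]
        intro x
        simp only [Finset.mem_union, Finset.mem_sdiff]
        have := hA2 x
        have := hA1 x
        have := hAB x
        have := @hdj x
        have := @hYB x
        grind only) (by
        ext x
        simp only [Finset.mem_union, Finset.mem_sdiff]
        have := hA2 x
        have := hA1 x
        have := hA12 x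
        have := @hYB x
        grind only)
    have hcl := comp_closed A₁ M N
    have hc := count hbip hM hN _ hcl
    have hCB : comp A₁ M N ∩ B = Y := by
      have e1 : comp A₁ M N ∩ (A₁ ∪ Y) ∩ U = A₁ := by
        ext x
        simp only [Finset.mem_inter, Finset.mem_union]
        have := hBU x
        have := @hAU x
        have := hk x
        have := hA1 x
        have := @hYB x
        grind only
      have e2 : comp A₁ M N ∩ (A₁ ∪ Y) ∩ V = comp A₁ M N ∩ Y := by
        ext x
        simp only [Finset.mem_inter, Finset.mem_union]
        have := hAV x
        have := @hBV x
        have := hA1 x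
        have := @hYB x
        grind only
      have e3 : comp A₁ M N ∩ (A₂ ∪ (B \ Y)) ∩ U = ∅ := by
        ext x
        simp only [Finset.mem_inter, Finset.mem_union, Finset.mem_sdiff, Finset.notMem_empty]
        have := hBU x
        have := hk x
        have := hA2 x
        have := @hdj x
        grind only
      have e4 : comp A₁ M N ∩ (A₂ ∪ (B \ Y)) ∩ V = comp A₁ M N ∩ (B \ Y) := by
        ext x
        simp only [Finset.mem_inter, Finset.mem_union, Finset.mem_sdiff]
        have := hAV x
        have := @hBV x
        have := hA2 x
        grind only
      rw [e1, e2, e3, e4, Finset.card_empty, zero_add] at hc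
      have hle := Finset.card_le_card (Finset.inter_subset_right : comp A₁ M N ∩ Y ⊆ Y)
      have h0 : comp A₁ M N ∩ (B \ Y) = ∅ := Finset.card_eq_zero.1 (by omega)
      have h1 : comp A₁ M N ∩ Y = Y :=
        Finset.eq_of_subset_of_card_le Finset.inter_subset_right (by omega)
      ext x
      have g0 := Finset.ext_iff.1 h0 x
      have g1 := Finset.ext_iff.1 h1 x
      simp only [Finset.mem_inter, Finset.mem_sdiff, Finset.notMem_empty] at g0 g1 ⊢
      have := @hYB x
      grind only
    have hCB' : ∀ x ∈ B, (x ∈ comp A₁ M N ↔ x ∈ Y) := by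
      intro x hx
      have := Finset.ext_iff.1 hCB x
      simp only [Finset.mem_inter] at this
      grind only
    refine ⟨hCB, ?_, ?_⟩
    · apply sw_pm hM hN _ hcl
      intro x
      simp only [Finset.mem_union, Finset.mem_sdiff, Finset.mem_univ, true_and]
      have := hk x
      have := hCB' x
      have := hA1 x
      have := hA2 x
      have := @hYB x
      have := @hdj x
      grind only
    · apply sw_pm hN hM _ (by
        intro u v h
        exact hcl u v (HG_adj.2 ⟨(HG_adj.1 h).1.symm, (HG_adj.1 h).2⟩))
      intro x
      simp only [Finset.mem_union, Finset.mem_sdiff, Finset.mem_univ, true_and]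
      have := hk x
      have := hCB' x
      have := hA1 x
      have := hA2 x
      have := hA12 x
      have := @hYB x
      have := @hdj x
      grind only
  unfold pmSum
  simp only [Finset.sum_mul_sum, ← Finset.sum_product']
  rw [Finset.sum_sigma']
  refine Finset.sum_bij'
    (fun p _ => ⟨comp A₁ p.1 p.2 ∩ B, (sw (comp A₁ p.1 p.2) p.1 p.2, sw (comp A₁ p.1 p.2) p.2 p.1)⟩)
    (fun q _ => (sw (comp A₁ q.2.1 q.2.2) q.2.1 q.2.2, sw (comp A₁ q.2.1 q.2.2) q.2.2 q.2.1))
    ?_ ?_ ?_ ?_ ?_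
  · rintro ⟨M, N⟩ h
    simp only [Finset.mem_product, Finset.mem_filter, Finset.mem_univ, true_and,
      Finset.mem_sigma, Finset.mem_powerset] at h ⊢
    obtain ⟨h1, h2, h3⟩ := hleft M N h.1 h.2
    exact ⟨⟨Finset.inter_subset_right, h1⟩, h2, h3⟩
  · rintro ⟨Y, M, N⟩ h
    simp only [Finset.mem_product, Finset.mem_filter, Finset.mem_univ, true_and,
      Finset.mem_sigma, Finset.mem_powerset] at h ⊢
    exact (hright Y M N h.1.1 h.1.2 h.2.1 h.2.2).2
  · rintro ⟨M, N⟩ h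
    simp only [comp_sw, sw_sw]
  · rintro ⟨Y, M, N⟩ h
    simp only [Finset.mem_product, Finset.mem_filter, Finset.mem_univ, true_and,
      Finset.mem_sigma, Finset.mem_powerset] at h
    simp only [comp_sw, sw_sw, (hright Y M N h.1.1 h.1.2 h.2.1 h.2.2).1]
  · rintro ⟨M, N⟩ h
    simp only [sw_prod]
end
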